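/- arXiv:1604.06997 — 3 statements merged into one kernel-verified Lean document; each statement's English description precedes it below -/
import Mathlib

section
/- For every integer k ≥ 2 and every k-decomposable permutation point set X of size n, the set BR of points of G whose pair is a bad pair satisfies |BR| ≤ 80 · n · log₂ k. -/
open Finset

attribute [local instance] Classical.propDecidable

/-- A point in the plane: first coordinate is the key, second is the time. -/
abbrev Pt : Type := ℤ × ℤ

/-- `r` lies in the closed axis-parallel rectangle with opposite corners `p` and `q`. -/
def inRect (p q r : Pt) : Prop :=
  min p.1 q.1 ≤ r.1 ∧ r.1 ≤ max p.1 q.1 ∧ min p.2 q.2 ≤ r.2 ∧ r.2 ≤ max p.2 q.2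

/-- `r` lies in the open axis-parallel rectangle with opposite corners `p` and `q`. -/
def inOpenRect (p q r : Pt) : Prop :=
  min p.1 q.1 < r.1 ∧ r.1 < max p.1 q.1 ∧ min p.2 q.2 < r.2 ∧ r.2 < max p.2 q.2

/-- `S` is an arborally satisfied set. -/
def ArbSat (S : Finset Pt) : Prop :=
  ∀ p ∈ S, ∀ q ∈ S, p.1 = q.1 ∨ p.2 = q.2 ∨ ∃ r ∈ S, r ≠ p ∧ r ≠ q ∧ inRect p q r

/-- `X` is the permutation point set `{(σ(t), t) : 1 ≤ t ≤ n}` of some permutation `σ` of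
`{1, …, n}`. -/
def IsPermPointSet (n : ℕ) (X : Finset Pt) : Prop :=
  ∃ σ : Equiv.Perm (Fin n),
    X = Finset.univ.image (fun t : Fin n => ((((σ t : ℕ) : ℤ) + 1, ((t : ℕ) : ℤ) + 1) : Pt))

/-- The points added by GREEDY at time `t`, given the point set `X` and the set `G` of points
added before time `t`: for the point `p` of `X` with time `t` and each point `q` of time `< t`
with a different key such that the rectangle spanned by `p` and `q` contains no other point of
time `< t`, the point `(key q, t)` is added. -/
noncomputable def greedyStep (X G : Finset Pt) (t : ℤ) : Finset Pt :=
  (X.filter (fun p => p.2 = t)).biUnion (fun p =>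
    (((X ∪ G).filter (fun s => s.2 < t)).filter (fun q =>
      q.1 ≠ p.1 ∧ ∀ r ∈ (X ∪ G).filter (fun s => s.2 < t), inRect p q r → r = q)).image
      (fun q => ((q.1, t) : Pt)))

/-- All points added by GREEDY while processing times `1, …, t`. -/
noncomputable def greedyUpTo (X : Finset Pt) : ℕ → Finset Pt
  | 0 => ∅
  | t + 1 => greedyUpTo X t ∪ greedyStep X (greedyUpTo X t) ((t : ℤ) + 1)

/-- The set `G` of points added by GREEDY over the whole execution on a permutation point set
`X` of size `n`. -/
noncomputable def greedyG (n : ℕ) (X : Finset Pt) : Finset Pt := greedyUpTo X n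

/-- `OP r` is the point of `X` processed at the time at which `r` was added; for `r ∈ X`,
`OP r = r`. -/
noncomputable def OP (X : Finset Pt) (r : Pt) : Pt :=
  ((X.filter (fun p => p.2 = r.2)).toList).headI

/-- The first point of `S` above `p`: the point of `S` with the same key as `p`, smaller time,
and the largest such time. -/
noncomputable def firstAbove (S : Finset Pt) (p : Pt) : Pt :=
  (p.1, (((S.filter (fun q => q.1 = p.1 ∧ q.2 < p.2)).image Prod.snd).max).unbotD 0)

/-- The pair `CP(p) = (OP(p), OP(q))` where `q` is the first point of `X ∪ G` above `p`. -/
noncomputable def CP (X G : Finset Pt) (p : Pt) : Pt × Pt :=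
  (OP X p, OP X (firstAbove (X ∪ G) p))

/-- `CP(p) ∈ MMC` (*zig*). -/
def inMMC (X G : Finset Pt) (p : Pt) : Prop :=
  ((CP X G p).1.1 < p.1 ∧ (CP X G p).2.1 < (CP X G p).1.1 ∧ (CP X G p).2.2 < (CP X G p).1.2)
  ∨ (p.1 < (CP X G p).1.1 ∧ (CP X G p).1.1 < (CP X G p).2.1 ∧ (CP X G p).2.2 < (CP X G p).1.2)

/-- `CP(p) ∈ MFC` (*zag*). -/
def inMFC (X G : Finset Pt) (p : Pt) : Prop :=
  ((CP X G p).1.1 < p.1 ∧ p.1 ≤ (CP X G p).2.1 ∧ (CP X G p).2.2 < p.2)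
  ∨ (p.1 < (CP X G p).1.1 ∧ (CP X G p).2.1 ≤ p.1 ∧ (CP X G p).2.2 < p.2)

/-- A pair is good if no point of `X` lies in the open rectangle spanned by it. -/
def IsGoodPair (X : Finset Pt) (pr : Pt × Pt) : Prop :=
  ∀ r ∈ X, ¬ inOpenRect pr.1 pr.2 r

/-- `B` is a block of `X`: the set of points of `X` whose times lie in some interval, whose
keys form a set of consecutive integers; blocks are nonempty. -/
def IsBlock (X B : Finset Pt) : Prop :=
  B.Nonempty ∧ (∃ i j : ℤ, B = X.filter (fun p => i ≤ p.2 ∧ p.2 ≤ j)) ∧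
    ∃ c d : ℤ, B.image Prod.fst = Finset.Icc c d

/-- `Top(B)`: the point of `B` with the smallest time. -/
noncomputable def TopPt (B : Finset Pt) : Pt :=
  ((B.filter (fun p => ∀ q ∈ B, p.2 ≤ q.2)).toList).headI

/-- A decomposition tree of `X`: a rooted tree whose nodes are blocks of `X`, whose root is
`X`, whose leaves are exactly the singleton blocks, and in which the children of every
internal node partition it. -/
structure DecompTree (X : Finset Pt) where
  nodes : Finset (Finset Pt)
  parent : Finset Pt → Finset Pt
  isBlock_nodes : ∀ B ∈ nodes, IsBlock X B
  root_mem : X ∈ nodes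
  parent_mem : ∀ B ∈ nodes, B ≠ X → parent B ∈ nodes
  ssubset_parent : ∀ B ∈ nodes, B ≠ X → B ⊂ parent B
  leaf_iff : ∀ B ∈ nodes, (¬ ∃ C ∈ nodes, C ≠ X ∧ parent C = B) ↔ B.card = 1
  children_partition : ∀ B ∈ nodes, B.card ≠ 1 →
    ∀ x ∈ B, ∃! C, C ∈ nodes ∧ C ≠ X ∧ parent C = B ∧ x ∈ C

/-- The children of a node `B` in a decomposition tree. -/
noncomputable def DecompTree.children {X : Finset Pt} (T : DecompTree X) (B : Finset Pt) :
    Finset (Finset Pt) :=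
  T.nodes.filter (fun C => C ≠ X ∧ T.parent C = B)

/-- `X` is `k`-decomposable: it admits a decomposition tree in which every node has at most
`k` children. -/
def kDecomposable (k : ℕ) (X : Finset Pt) : Prop :=
  ∃ T : DecompTree X, ∀ B ∈ T.nodes, (T.children B).card ≤ k

/-- `RT(p)`: the node of the decomposition tree closest to the root (i.e. containing all
others) among the nodes `B` with `Top(B) = p`. -/
noncomputable def RT {X : Finset Pt} (T : DecompTree X) (p : Pt) : Finset Pt :=
  (((T.nodes.filter (fun B => TopPt B = p)).filter
      (fun B => ∀ C ∈ T.nodes, TopPt C = p → C ⊆ B)).toList).headI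

/-- The points added by GREEDY (`G`) while processing `Top(B)` that lie to the left of
`Top(B)`. -/
noncomputable def leftSet (G B : Finset Pt) : Finset Pt :=
  G.filter (fun s => s.2 = (TopPt B).2 ∧ s.1 < (TopPt B).1)

/-- `Left(B)`: among the points added by GREEDY while processing `Top(B)` with key less than
`key (Top B)`, the one with the largest key (junk if none exists). -/
noncomputable def leftPt (G B : Finset Pt) : Pt :=
  (((leftSet G B).filter (fun s => ∀ r ∈ leftSet G B, r.1 ≤ s.1)).toList).headI

/-- The points added by GREEDY (`G`) while processing `Top(B)` that lie to the right of
`Top(B)`. -/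
noncomputable def rightSet (G B : Finset Pt) : Finset Pt :=
  G.filter (fun s => s.2 = (TopPt B).2 ∧ (TopPt B).1 < s.1)

/-- `Right(B)`: among the points added by GREEDY while processing `Top(B)` with key greater
than `key (Top B)`, the one with the smallest key (junk if none exists). -/
noncomputable def rightPt (G B : Finset Pt) : Pt :=
  (((rightSet G B).filter (fun s => ∀ r ∈ rightSet G B, s.1 ≤ r.1)).toList).headI

/-!
GREEDY adds only `O(n log k)` points altogether, whether or not their pairs are bad. At most `n` of
them are final, i.e. the last points on their keys. The nonfinal points are charged to the
decomposition tree. When the first point of a child `C` of a node `B` is accessed, later than the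
first point of `B`, the nonfinal keys touched are at most two outside `B`, because the first access
in `B` shields all keys outside `B` but its two neighbours, and at most two in each touched child of
`B`, because the outer two shield all keys between them. It remains to see that the `m` children of
`B` touch each other only `O(m log m)` times.

For this, let the reach of a child be the set of children from which GREEDY would touch it, and take
the sum of the logarithms of the sizes of the reaches as potential. Before an access, the reaches of
the touched children extend all the way to the accessed one; after it, on either side, all of them
but the first and the last are confined between the two neighbouring touched children. Since
`log x + log y + 2 ≤ 2 log (x + y)`, the drop in potential pays for touching them. Summing `m - 1`
over the inner nodes of the tree gives `n - 1`.
-/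

theorem one_le_logb_two {x : ℝ} (hx : 2 ≤ x) : 1 ≤ Real.logb 2 x := by
  rwa [Real.le_logb_iff_rpow_le one_lt_two (two_pos.trans_le hx), Real.rpow_one]

theorem logb_add_logb_add_two_le {x y z : ℝ} (hx : 0 < x) (hy : 0 < y) (h : x + y ≤ z) :
    Real.logb 2 x + Real.logb 2 y + 2 ≤ 2 * Real.logb 2 z := by
  have hxyz : x * y * 2 ^ 2 ≤ z ^ 2 := by nlinarith [sq_nonneg (x - y)]
  calc Real.logb 2 x + Real.logb 2 y + 2
      = Real.logb 2 (x * y * 2 ^ 2) := by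
        rw [Real.logb_mul (by positivity) (by positivity), Real.logb_mul hx.ne' hy.ne',
          Real.logb_pow, Real.logb_self_eq_one one_lt_two]
        norm_num
    _ ≤ Real.logb 2 (z ^ 2) := Real.logb_le_logb_of_le one_lt_two (by positivity) hxyz
    _ = 2 * Real.logb 2 z := by rw [Real.logb_pow]; norm_num

theorem sum_logb_succ_add_two_le {d e : ℕ → ℝ} {m : ℕ} (hd : ∀ i < m + 2, 1 ≤ d i)
    (he : ∀ i < m, 0 < e (i + 1)) (hde : ∀ i < m, e (i + 1) + d i ≤ d (i + 2)) :
    ∑ i ∈ range m, (Real.logb 2 (e (i + 1)) + 2) ≤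
      ∑ i ∈ range (m + 2), Real.logb 2 (d i) + Real.logb 2 (d m) + Real.logb 2 (d (m + 1)) := by
  induction m with
  | zero =>
    have h₀ := Real.logb_nonneg one_lt_two (hd 0 (by omega))
    have h₁ := Real.logb_nonneg one_lt_two (hd 1 (by omega))
    simp only [sum_range_succ, sum_range_zero, zero_add]
    linarith
  | succ m ih =>
    have hprev := ih (fun i hi => hd i (by omega)) (fun i hi => he i (by omega))
      fun i hi => hde i (by omega)
    have hgain := logb_add_logb_add_two_le (he m (by omega))
      (zero_lt_one.trans_le (hd m (by omega))) (hde m (by omega))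
    rw [sum_range_succ, sum_range_succ _ (m + 2)]
    linarith

theorem sum_logb_add_two_mul_le {d e : ℕ → ℝ} {M : ℝ} {n : ℕ} (hM : 1 ≤ M)
    (hd : ∀ i < n, 1 ≤ d i) (hdM : ∀ i < n, d i ≤ M) (he : ∀ i < n, 0 < e i)
    (heM : ∀ i < n, e i ≤ M) (hde : ∀ i, i + 2 < n → e (i + 1) + d i ≤ d (i + 2)) :
    ∑ i ∈ range n, Real.logb 2 (e i) + 2 * n ≤
      ∑ i ∈ range n, Real.logb 2 (d i) + 4 + 4 * Real.logb 2 M := by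
  have hlogM : 0 ≤ Real.logb 2 M := Real.logb_nonneg one_lt_two hM
  have hlogd : ∀ i < n, Real.logb 2 (d i) ≤ Real.logb 2 M := fun i hi =>
    Real.logb_le_logb_of_le one_lt_two (zero_lt_one.trans_le (hd i hi)) (hdM i hi)
  have hloge : ∀ i < n, Real.logb 2 (e i) ≤ Real.logb 2 M := fun i hi =>
    Real.logb_le_logb_of_le one_lt_two (he i hi) (heM i hi)
  rcases n with _ | _ | m
  · simp only [range_zero, sum_empty, CharP.cast_eq_zero]
    linarith
  · have hd₀ := Real.logb_nonneg one_lt_two (hd 0 one_pos)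
    simp only [zero_add, sum_range_one, Nat.cast_one]
    linarith [hloge 0 one_pos]
  · have hinner := sum_logb_succ_add_two_le hd (fun i hi => he (i + 1) (by omega))
      fun i hi => hde i (by omega)
    rw [sum_add_distrib, sum_const, card_range, nsmul_eq_mul] at hinner
    rw [sum_range_succ, sum_range_succ']
    push_cast
    linarith [hlogd m (by omega), hlogd (m + 1) (by omega), hloge 0 (by omega),
      hloge (m + 1) (by omega)]

theorem exists_strictMonoOn_enum {α β : Type*} [DecidableEq α] [LinearOrder β] {s : Finset α}
    (hs : s.Nonempty) {κ : α → β} (hκ : Set.InjOn κ s) :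
    ∃ x : ℕ → α, StrictMonoOn (κ ∘ x) (Set.Iio #s) ∧ (range #s).image x = s := by
  have hcard : #(s.image κ) = #s := card_image_of_injOn hκ
  have hmem : ∀ i : Fin #s, ∃ a ∈ s, κ a = (s.image κ).orderEmbOfFin hcard i := fun i =>
    mem_image.1 (orderEmbOfFin_mem _ hcard i)
  choose y hys hy using hmem
  have hy' : StrictMono (κ ∘ y) := fun i j hij => by
    simpa only [Function.comp_apply, hy] using ((s.image κ).orderEmbOfFin hcard).strictMono hij
  obtain ⟨a₀, -⟩ := hs
  let x : ℕ → α := fun i => if hi : i < #s then y ⟨i, hi⟩ else a₀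
  have hx : ∀ i (hi : i < #s), x i = y ⟨i, hi⟩ := fun i hi => dif_pos hi
  have hxmono : StrictMonoOn (κ ∘ x) (Set.Iio #s) := fun i hi j hj hij => by
    simpa only [Function.comp_apply, hx i hi, hx j hj] using
      hy' (Fin.mk_lt_mk.2 hij : (⟨i, hi⟩ : Fin #s) < ⟨j, hj⟩)
  refine ⟨x, hxmono, eq_of_subset_of_card_le ?_ ?_⟩
  · refine image_subset_iff.2 fun i hi => ?_
    rw [hx i (mem_range.1 hi)]
    exact hys _
  · rw [card_image_of_injOn, card_range]
    exact fun i hi j hj hij => hxmono.injOn (mem_range.1 hi) (mem_range.1 hj) (congrArg κ hij)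

theorem card_le_two_of_forall_not_lt_lt {α : Type*} [LinearOrder α] {s : Finset α}
    (h : ∀ x ∈ s, ∀ y ∈ s, ∀ z ∈ s, x < y → ¬ y < z) : #s ≤ 2 := by
  by_contra! hs
  let e := s.orderEmbOfFin rfl
  have he : ∀ {i j : ℕ} (hi : i < #s) (hj : j < #s), i < j → e ⟨i, hi⟩ < e ⟨j, hj⟩ :=
    fun _ _ hij => e.strictMono (Fin.mk_lt_mk.2 hij)
  exact h _ (orderEmbOfFin_mem s rfl ⟨0, by omega⟩) _ (orderEmbOfFin_mem s rfl ⟨1, by omega⟩) _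
    (orderEmbOfFin_mem s rfl ⟨2, hs⟩) (he _ _ one_pos) (he _ _ one_lt_two)

theorem card_add_card_Ioc_le_card_Ioc {α : Type*} [LinearOrder α] [LocallyFiniteOrder α]
    {s : Finset α} {a y z : α} (hs : s ⊆ Ioo y z) (hay : a ≤ y) (hyz : y ≤ z) :
    #s + #(Ioc a y) ≤ #(Ioc a z) := by
  have hdisj : Disjoint s (Ioc a y) := disjoint_left.2 fun j hj hj' =>
    (mem_Ioo.1 (hs hj)).1.not_ge (mem_Ioc.1 hj').2
  rw [← card_union_of_disjoint hdisj]
  exact card_le_card (union_subset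
    (hs.trans (Ioo_subset_Ioc_self.trans (Ioc_subset_Ioc_left hay))) (Ioc_subset_Ioc_right hyz))

section Potential

variable {ι α : Type*} [Fintype ι] [LinearOrder ι] [LinearOrder α]

/-- The positions `j` from which GREEDY touches `y`, when `E` is the set of present positions and
`ρ` records their last touches: on the way from `j` to `y`, `y` is the most recently touched. -/
noncomputable def reach (E : Finset ι) (ρ : ι → α) (y : ι) : Finset ι :=
  {j | ∀ z ∈ E, z ≠ y → z ∈ Set.uIcc j y → ρ z < ρ y}

/-- The potential of a configuration, used to amortise the number of touched positions. -/
noncomputable def potential (E : Finset ι) (ρ : ι → α) : ℝ :=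
  ∑ y ∈ E, Real.logb 2 #(reach E ρ y)

theorem mem_reach {E : Finset ι} {ρ : ι → α} {j y : ι} :
    j ∈ reach E ρ y ↔ ∀ z ∈ E, z ≠ y → z ∈ Set.uIcc j y → ρ z < ρ y :=
  mem_filter_univ j

theorem self_mem_reach (E : Finset ι) (ρ : ι → α) (y : ι) : y ∈ reach E ρ y :=
  mem_reach.2 fun _ _ hzy hz => absurd (by simpa using hz) hzy

theorem card_reach_pos (E : Finset ι) (ρ : ι → α) (y : ι) : (0 : ℝ) < #(reach E ρ y) :=
  Nat.cast_pos.2 (card_pos.2 ⟨y, self_mem_reach E ρ y⟩)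

theorem potential_nonneg (E : Finset ι) (ρ : ι → α) : 0 ≤ potential E ρ :=
  sum_nonneg fun y _ => Real.logb_nonneg one_lt_two
    (Nat.one_le_cast.2 (card_pos.2 ⟨y, self_mem_reach E ρ y⟩))

theorem mem_reach_of_mem_uIcc {E : Finset ι} {ρ : ι → α} {a j y : ι} (ha : a ∈ reach E ρ y)
    (hj : j ∈ Set.uIcc a y) : j ∈ reach E ρ y :=
  mem_reach.2 fun z hz hzy hzj =>
    mem_reach.1 ha z hz hzy (Set.uIcc_subset_uIcc hj Set.right_mem_uIcc hzj)

theorem reach_insert_subset {E : Finset ι} {ρ ρ' : ι → α} {a y : ι}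
    (hmono : ∀ z ∈ E, ρ z ≤ ρ' z) (hy : ρ' y = ρ y) :
    reach (insert a E) ρ' y ⊆ reach E ρ y := fun _ hj =>
  mem_reach.2 fun z hz hzy hzj =>
    (hmono z hz).trans_lt (hy ▸ mem_reach.1 hj z (mem_insert_of_mem hz) hzy hzj)

theorem reach_subset_Ioo [LocallyFiniteOrder ι] {E : Finset ι} {ρ : ι → α} {x y z : ι}
    (hy : y ∈ E) (hz : z ∈ E) (hyx : y < x) (hxz : x < z) (hρy : ρ x ≤ ρ y) (hρz : ρ x ≤ ρ z) :
    reach E ρ x ⊆ Ioo y z := by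
  refine fun j hj => mem_Ioo.2 ⟨lt_of_not_ge fun hjy => ?_, lt_of_not_ge fun hzj => ?_⟩
  · exact (mem_reach.1 hj y hy hyx.ne (Set.mem_uIcc.2 (Or.inl ⟨hjy, hyx.le⟩))).not_ge hρy
  · exact (mem_reach.1 hj z hz hxz.ne' (Set.mem_uIcc.2 (Or.inr ⟨hxz.le, hzj⟩))).not_ge hρz

theorem logb_card_reach_le (E : Finset ι) (ρ : ι → α) (y : ι) :
    Real.logb 2 #(reach E ρ y) ≤ Real.logb 2 (Fintype.card ι) :=
  Real.logb_le_logb_of_le one_lt_two (card_reach_pos E ρ y) (Nat.cast_le.2 (card_le_univ _))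

theorem logb_card_reach_insert_le {E : Finset ι} {ρ ρ' : ι → α} {a y : ι}
    (hmono : ∀ z ∈ E, ρ z ≤ ρ' z) (hy : ρ' y = ρ y) :
    Real.logb 2 #(reach (insert a E) ρ' y) ≤ Real.logb 2 #(reach E ρ y) :=
  Real.logb_le_logb_of_le one_lt_two (card_reach_pos _ ρ' y)
    (Nat.cast_le.2 (card_le_card (reach_insert_subset hmono hy)))

theorem sum_logb_card_right_le [LocallyFiniteOrder ι] {T : Finset ι} {a : ι}
    {old new : ι → Finset ι} (ha : ∀ x ∈ T, a < x) (hold : ∀ x ∈ T, Ioc a x ⊆ old x)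
    (hnew : ∀ x ∈ T, (new x).Nonempty)
    (hmid : ∀ y ∈ T, ∀ x ∈ T, ∀ z ∈ T, y < x → x < z → new x ⊆ Ioo y z) :
    ∑ x ∈ T, Real.logb 2 #(new x) + 2 * #T ≤
      ∑ x ∈ T, Real.logb 2 #(old x) + 4 + 4 * Real.logb 2 (Fintype.card ι) := by
  have hd : ∀ x ∈ T, (1 : ℝ) ≤ #(Ioc a x) := fun x hx =>
    Nat.one_le_cast.2 (card_pos.2 ⟨x, right_mem_Ioc.2 (ha x hx)⟩)
  have hι : (1 : ℝ) ≤ Fintype.card ι := Nat.one_le_cast.2 (Fintype.card_pos_iff.2 ⟨a⟩)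
  have hsum : ∑ x ∈ T, Real.logb 2 #(new x) + 2 * #T ≤
      ∑ x ∈ T, Real.logb 2 #(Ioc a x) + 4 + 4 * Real.logb 2 (Fintype.card ι) := by
    rcases T.eq_empty_or_nonempty with rfl | hT
    · simp only [sum_empty, card_empty, CharP.cast_eq_zero]
      linarith [Real.logb_nonneg one_lt_two hι]
    obtain ⟨x, hx, hxT⟩ := exists_strictMonoOn_enum hT (κ := id) (Set.injOn_id _)
    have hxmem : ∀ i < #T, x i ∈ T := fun i hi =>
      hxT ▸ mem_image_of_mem x (mem_range.2 hi)
    have hreindex : ∀ f : ι → ℝ, ∑ y ∈ T, f y = ∑ i ∈ range #T, f (x i) := fun f => by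
      conv_lhs => rw [← hxT]
      exact sum_image fun i hi j hj => hx.injOn (mem_range.1 hi) (mem_range.1 hj)
    rw [hreindex, hreindex]
    refine sum_logb_add_two_mul_le hι (fun i hi => hd _ (hxmem i hi))
      (fun i _ => Nat.cast_le.2 (card_le_univ _))
      (fun i hi => Nat.cast_pos.2 (card_pos.2 (hnew _ (hxmem i hi))))
      (fun i _ => Nat.cast_le.2 (card_le_univ _)) fun i hi => ?_
    have hi₁ : i + 1 < #T := by omega
    have hi₀ : i < #T := by omega
    have hx₀ : x i < x (i + 1) := hx hi₀ hi₁ (Nat.lt_succ_self i)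
    have hx₁ : x (i + 1) < x (i + 2) := hx hi₁ hi (Nat.lt_succ_self (i + 1))
    exact_mod_cast card_add_card_Ioc_le_card_Ioc
      (hmid _ (hxmem i hi₀) _ (hxmem _ hi₁) _ (hxmem _ hi) hx₀ hx₁) (ha _ (hxmem i hi₀)).le
      (hx₀.trans hx₁).le
  have hle : ∑ x ∈ T, Real.logb 2 (#(Ioc a x) : ℝ) ≤ ∑ x ∈ T, Real.logb 2 (#(old x) : ℝ) :=
    sum_le_sum fun x hx => Real.logb_le_logb_of_le one_lt_two (zero_lt_one.trans_le (hd x hx))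
      (Nat.cast_le.2 (card_le_card (hold x hx)))
  linarith

theorem sum_logb_card_left_le [LocallyFiniteOrder ι] {T : Finset ι} {a : ι}
    {old new : ι → Finset ι} (ha : ∀ x ∈ T, x < a) (hold : ∀ x ∈ T, Ico x a ⊆ old x)
    (hnew : ∀ x ∈ T, (new x).Nonempty)
    (hmid : ∀ y ∈ T, ∀ x ∈ T, ∀ z ∈ T, y < x → x < z → new x ⊆ Ioo y z) :
    ∑ x ∈ T, Real.logb 2 #(new x) + 2 * #T ≤
      ∑ x ∈ T, Real.logb 2 #(old x) + 4 + 4 * Real.logb 2 (Fintype.card ι) :=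
  sum_logb_card_right_le (ι := ιᵒᵈ) ha
    (fun x hx _ hj => hold x hx (mem_Ico.2 (mem_Ioc.1 hj).symm)) hnew
    fun y hy x hx z hz hyx hxz _ hj =>
      mem_Ioo.2 (mem_Ioo.1 (hmid z hz x hx y hy hxz hyx hj)).symm

/-- The amortised cost of an access at `a` that touches `T`: before the access, the reaches of the
touched positions extend all the way to `a`; after it, those with touched positions on both sides
are confined between these. -/
theorem two_mul_card_add_potential_le [LocallyFiniteOrder ι] {E T : Finset ι} {a : ι}
    {ρ ρ' : ι → α} (haE : a ∉ E) (hTE : T ⊆ E) (hreach : ∀ x ∈ T, a ∈ reach E ρ x)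
    (hmono : ∀ z ∈ E, ρ z ≤ ρ' z) (huntouched : ∀ z ∈ E, z ∉ T → ρ' z = ρ z)
    (hfar : ∀ x ∈ T, ∀ z ∈ T, z ≠ x → z ∈ Set.uIcc a x → ∀ y ∈ T, ρ' x ≤ ρ' y) :
    2 * #T + potential (insert a E) ρ' ≤
      potential E ρ + 8 + 9 * Real.logb 2 (Fintype.card ι) := by
  have hmid : ∀ y ∈ T, ∀ x ∈ T, ∀ z ∈ T, y < x → x < z → (a < y ∨ z < a) →
      reach (insert a E) ρ' x ⊆ Ioo y z := by
    intro y hy x hx z hz hyx hxz hside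
    have hmin : ∀ w ∈ T, ρ' x ≤ ρ' w := hside.elim
      (fun h => hfar x hx y hy hyx.ne (Set.mem_uIcc.2 (Or.inl ⟨h.le, hyx.le⟩)))
      (fun h => hfar x hx z hz hxz.ne' (Set.mem_uIcc.2 (Or.inr ⟨hxz.le, h.le⟩)))
    exact reach_subset_Ioo (mem_insert_of_mem (hTE hy)) (mem_insert_of_mem (hTE hz)) hyx hxz
      (hmin y hy) (hmin z hz)
  have hright := sum_logb_card_right_le (T := {x ∈ T | a < x}) (old := reach E ρ)
    (new := reach (insert a E) ρ') (fun x hx => (mem_filter.1 hx).2)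
    (fun x hx j hj => mem_reach_of_mem_uIcc (hreach x (mem_filter.1 hx).1)
      (Set.mem_uIcc.2 (Or.inl ((mem_Ioc.1 hj).imp_left le_of_lt))))
    (fun x _ => ⟨x, self_mem_reach _ _ x⟩)
    fun y hy x hx z hz hyx hxz => hmid y (mem_filter.1 hy).1 x (mem_filter.1 hx).1 z
      (mem_filter.1 hz).1 hyx hxz (Or.inl (mem_filter.1 hy).2)
  have hne : ∀ x ∈ T, x ≠ a := fun x hx hxa => haE (hxa ▸ hTE hx)
  have hleft := sum_logb_card_left_le (T := {x ∈ T | ¬ a < x}) (old := reach E ρ)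
    (new := reach (insert a E) ρ')
    (fun x hx => (not_lt.1 (mem_filter.1 hx).2).lt_of_ne (hne x (mem_filter.1 hx).1))
    (fun x hx j hj => mem_reach_of_mem_uIcc (hreach x (mem_filter.1 hx).1)
      (Set.mem_uIcc.2 (Or.inr ((mem_Ico.1 hj).imp_right le_of_lt))))
    (fun x _ => ⟨x, self_mem_reach _ _ x⟩)
    fun y hy x hx z hz hyx hxz => hmid y (mem_filter.1 hy).1 x (mem_filter.1 hx).1 z
      (mem_filter.1 hz).1 hyx hxz
      (Or.inr ((not_lt.1 (mem_filter.1 hz).2).lt_of_ne (hne z (mem_filter.1 hz).1)))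
  have hrest : ∑ x ∈ E \ T, Real.logb 2 (#(reach (insert a E) ρ' x) : ℝ) ≤
      ∑ x ∈ E \ T, Real.logb 2 (#(reach E ρ x) : ℝ) := sum_le_sum fun x hx =>
    logb_card_reach_insert_le hmono (huntouched x (mem_sdiff.1 hx).1 (mem_sdiff.1 hx).2)
  have hnew := logb_card_reach_le (insert a E) ρ' a
  have hcard : (#{x ∈ T | a < x} : ℝ) + #{x ∈ T | ¬ a < x} = #T := by
    exact_mod_cast card_filter_add_card_filter_not (s := T) (a < ·)
  rw [potential, potential, sum_insert haE, ← sum_sdiff hTE,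
    ← sum_sdiff (f := fun x => Real.logb 2 (#(reach E ρ x) : ℝ)) hTE,
    ← sum_filter_add_sum_filter_not T (a < ·),
    ← sum_filter_add_sum_filter_not T (a < ·) fun x => Real.logb 2 (#(reach E ρ x) : ℝ)]
  linarith

end Potential

theorem TopPt_spec {B : Finset Pt} (hB : B.Nonempty) :
    TopPt B ∈ B ∧ ∀ q ∈ B, (TopPt B).2 ≤ q.2 := by
  have hheadI : ∀ l : List Pt, l ≠ [] → l.headI ∈ l
    | _ :: _, _ => List.mem_cons_self
  obtain ⟨p, hp, hmin⟩ := exists_min_image B Prod.snd hB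
  have hne : B.filter (fun p => ∀ q ∈ B, p.2 ≤ q.2) ≠ ∅ :=
    ne_empty_of_mem (mem_filter.2 ⟨hp, hmin⟩)
  exact mem_filter.1 (mem_toList.1 (hheadI _ (mt toList_eq_nil.1 hne)))

/-- GREEDY, having added the points of `S` so far, touches the key `x` when it processes `p`. The
empty-rectangle rule is encoded through last touches: `x` was touched before, and more recently than
all other keys on the way from `p.1` to `x`. -/
def Touches (S : Finset Pt) (p : Pt) (x : ℤ) : Prop :=
  p.1 ≠ x ∧ ∃ s < p.2, (x, s) ∈ S ∧
    ∀ y ∈ Set.uIcc p.1 x, y ≠ x → ∀ u < p.2, (y, u) ∈ S → u < s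

/-- `G` is the set of points added by GREEDY on `X`, whose points have distinct keys and distinct
times. -/
structure IsGreedy (X G : Finset Pt) : Prop where
  key_inj : Set.InjOn Prod.fst (X : Set Pt)
  time_inj : Set.InjOn Prod.snd (X : Set Pt)
  mem_iff : ∀ x t, (x, t) ∈ G ↔ ∃ p ∈ X, p.2 = t ∧ Touches (X ∪ G) p x

/-- A nonempty part of `X` that is convex in `X` both in time and in key. Every block is a box;
unlike blocks, boxes make sense for point sets whose keys and times have gaps. -/
structure IsBox (X B : Finset Pt) : Prop where
  nonempty : B.Nonempty
  subset : B ⊆ X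
  time_convex : ∀ p ∈ X, ∀ q ∈ B, ∀ r ∈ B, q.2 ≤ p.2 → p.2 ≤ r.2 → p ∈ B
  key_convex : ∀ p ∈ X, ∀ q ∈ B, ∀ r ∈ B, p.1 ∈ Set.uIcc q.1 r.1 → p ∈ B

namespace IsGreedy

variable {X G : Finset Pt}

theorem exists_origin (h : IsGreedy X G) {x t : ℤ} (hx : (x, t) ∈ G) :
    ∃ y ∈ X, y.1 = x ∧ y.2 < t := by
  obtain ⟨p, -, rfl, -, s, hst, hs, -⟩ := (h.mem_iff x t).1 hx
  obtain ⟨y, hy, hymin⟩ := exists_min_image {w ∈ X ∪ G | w.1 = x} Prod.snd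
    ⟨(x, s), mem_filter.2 ⟨hs, rfl⟩⟩
  obtain ⟨hyS, hyx⟩ := mem_filter.1 hy
  have hys : y.2 ≤ s := hymin (x, s) (mem_filter.2 ⟨hs, rfl⟩)
  refine ⟨y, (mem_union.1 hyS).resolve_right fun hyG => ?_, hyx, by omega⟩
  obtain ⟨q, -, hqy, -, u, huq, hu, -⟩ := (h.mem_iff y.1 y.2).1 hyG
  exact (hymin (y.1, u) (mem_filter.2 ⟨hu, hyx⟩)).not_gt (hqy ▸ huq)

theorem exists_origin_le (h : IsGreedy X G) {x t : ℤ} (hx : (x, t) ∈ X ∪ G) :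
    ∃ y ∈ X, y.1 = x ∧ y.2 ≤ t :=
  (mem_union.1 hx).elim (fun hX => ⟨(x, t), hX, rfl, le_rfl⟩) fun hG =>
    let ⟨y, hy, hyx, hyt⟩ := h.exists_origin hG
    ⟨y, hy, hyx, hyt.le⟩

theorem neighbor_mem (h : IsGreedy X G) {p y : Pt} (hp : p ∈ X) (hy : y ∈ X) (hyp : y.2 < p.2)
    (hnear : ∀ z ∈ X, z.2 < p.2 → z.1 ∈ Set.uIcc p.1 y.1 → z = y) : (y.1, p.2) ∈ G := by
  refine (h.mem_iff _ _).2 ⟨p, hp, rfl, fun hpy => hyp.ne' (congrArg Prod.snd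
    (h.key_inj hp hy hpy)), y.2, hyp, mem_union_left _ hy, fun x hx hxy u hu hxu => ?_⟩
  obtain ⟨z, hz, rfl, hzu⟩ := h.exists_origin_le hxu
  exact absurd (congrArg Prod.fst (hnear z hz (hzu.trans_lt hu) hx)) hxy

theorem exists_touched_between (h : IsGreedy X G) {p y : Pt} (hp : p ∈ X) (hy : y ∈ X)
    (hyp : y.2 < p.2) : ∃ z ∈ X, z.2 < p.2 ∧ z.1 ∈ Set.uIcc p.1 y.1 ∧ (z.1, p.2) ∈ G := by
  obtain ⟨z, hz, hzmin⟩ := exists_min_image {w ∈ X | w.2 < p.2 ∧ w.1 ∈ Set.uIcc p.1 y.1}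
    (fun w => (w.1 - p.1).natAbs) ⟨y, mem_filter.2 ⟨hy, hyp, Set.right_mem_uIcc⟩⟩
  obtain ⟨hzX, hzp, hzy⟩ := mem_filter.1 hz
  refine ⟨z, hzX, hzp, hzy, h.neighbor_mem hp hzX hzp fun w hw hwp hwz => h.key_inj hw hzX ?_⟩
  have hclosest := hzmin w (mem_filter.2 ⟨hw, hwp, Set.uIcc_subset_uIcc_left hzy hwz⟩)
  rw [Set.mem_uIcc] at hwz
  omega

theorem exists_first_retouch (h : IsGreedy X G) {y : Pt} {t u : ℤ} (hy : y ∈ X) (hyt : y.2 ≤ t)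
    (htu : t < u) (hu : (y.1, u) ∈ G) : ∃ p ∈ X, t < p.2 ∧ p.2 ≤ u ∧
      ∀ z ∈ Set.uIcc p.1 y.1, (z, t) ∈ X ∪ G → z = y.1 := by
  obtain ⟨v, hv, hvmin⟩ := exists_min_image {w ∈ G | w.1 = y.1 ∧ t < w.2} Prod.snd
    ⟨(y.1, u), mem_filter.2 ⟨hu, rfl, htu⟩⟩
  obtain ⟨hvG, hvy, htv⟩ := mem_filter.1 hv
  obtain ⟨p, hp, hpv, -, s, hsv, hs, hlast⟩ := (h.mem_iff v.1 v.2).1 hvG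
  have hst : s ≤ t := by
    by_contra! hts
    rcases mem_union.1 hs with hsX | hsG
    · have hsy : s = y.2 := congrArg Prod.snd (h.key_inj hsX hy hvy)
      omega
    · exact (hvmin _ (mem_filter.2 ⟨hsG, hvy, hts⟩)).not_gt (hpv ▸ hsv)
  have hvu : v.2 ≤ u := hvmin _ (mem_filter.2 ⟨hu, rfl, htu⟩)
  refine ⟨p, hp, by omega, by omega, fun z hz hzt => ?_⟩
  rw [← hvy] at hz ⊢
  by_contra hzv
  exact (hlast z hz hzv t (hpv ▸ htv) hzt).not_ge hst

theorem exists_origin_before_box (h : IsGreedy X G) {B : Finset Pt} (hB : IsBox X B) {p : Pt}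
    {x : ℤ} (hp : p ∈ B) (hx : (x, p.2) ∈ G) (hxB : ∀ b ∈ B, b.1 ≠ x) :
    ∃ y ∈ X, y.1 = x ∧ y.2 < (TopPt B).2 := by
  obtain ⟨y, hy, hyx, hyp⟩ := h.exists_origin hx
  refine ⟨y, hy, hyx, lt_of_not_ge fun hle => ?_⟩
  exact hxB y (hB.time_convex y hy _ (TopPt_spec hB.nonempty).1 p hp hle hyp.le) hyx

/-- After the first access in a box `B`, and until its last one, every touched key outside `B` is a
neighbour of `B` among the keys inserted before `B`: the first access shields all others. -/
theorem eq_of_between_box (h : IsGreedy X G) {B : Finset Pt} (hB : IsBox X B) {p : Pt} {x : ℤ}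
    (hp : p ∈ B) (htop : (TopPt B).2 < p.2) (hx : (x, p.2) ∈ G) (hxB : ∀ b ∈ B, b.1 ≠ x) {y : Pt}
    (hy : y ∈ X) (hyB : y.2 < (TopPt B).2) (hyx : y.1 ∈ Set.uIcc (TopPt B).1 x) : y.1 = x := by
  obtain ⟨hBtop, hBmin⟩ := TopPt_spec hB.nonempty
  obtain ⟨w, hw, rfl, hwB⟩ := h.exists_origin_before_box hB hp hx hxB
  obtain ⟨q, hq, htopq, hqp, hfirst⟩ := h.exists_first_retouch hw hwB.le htop hx
  have hqB : q ∈ B := hB.time_convex q hq _ hBtop p hp htopq.le hqp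
  obtain ⟨z, hz, hzB, hzy, hzG⟩ := h.exists_touched_between (hB.subset hBtop) hy hyB
  have hz_notMem : z.1 ∉ Set.uIcc (TopPt B).1 q.1 := fun hzq =>
    (hBmin z (hB.key_convex z hz _ hBtop q hqB hzq)).not_gt hzB
  have hzw := hfirst z.1
  simp only [Set.mem_uIcc, mem_union, hzG, or_true, forall_const] at hyx hzy hz_notMem hzw
  omega

theorem mem_top_of_mem_box (h : IsGreedy X G) {B : Finset Pt} (hB : IsBox X B) {p : Pt} {x : ℤ}
    (hp : p ∈ B) (hx : (x, p.2) ∈ G) (hxB : ∀ b ∈ B, b.1 ≠ x) : (x, (TopPt B).2) ∈ G := by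
  obtain ⟨hBtop, hBmin⟩ := TopPt_spec hB.nonempty
  rcases (hBmin p hp).lt_or_eq with hlt | heq
  · obtain ⟨y, hy, rfl, hyB⟩ := h.exists_origin_before_box hB hp hx hxB
    exact h.neighbor_mem (hB.subset hBtop) hy hyB fun z hz hzB hzy =>
      h.key_inj hz hy (h.eq_of_between_box hB hp hlt hx hxB hz hzB hzy)
  · rwa [heq]

/-- Any later access lies on one side of the box `C`, so the outer key of `C` on that side, touched
at time `t`, shields the middle one. -/
theorem not_touched_of_between (h : IsGreedy X G) {C : Finset Pt} (hC : IsBox X C) {t u : ℤ}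
    {x y z : Pt} (hx : x ∈ C) (hy : y ∈ C) (hz : z ∈ C) (hCt : ∀ c ∈ C, c.2 < t)
    (hxG : (x.1, t) ∈ G) (hzG : (z.1, t) ∈ G) (hxy : x.1 < y.1) (hyz : y.1 < z.1)
    (hu : (y.1, u) ∈ G) : ¬ t < u := by
  intro htu
  obtain ⟨p, hp, htp, -, hfirst⟩ := h.exists_first_retouch (hC.subset hy) (hCt y hy).le htu hu
  have hp_notMem : p.1 ∉ Set.uIcc x.1 z.1 := fun hpC =>
    (hCt p (hC.key_convex p hp x hx z hz hpC)).not_gt htp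
  have hx_eq := hfirst x.1
  have hz_eq := hfirst z.1
  simp only [Set.mem_uIcc, mem_union, hxG, hzG, or_true, forall_const] at hp_notMem hx_eq hz_eq
  omega

end IsGreedy

/-- The parts `P i` partition the box `B` into boxes, listed in increasing order of their keys. -/
structure IsBoxPartition {ι : Type*} [LinearOrder ι] (X B : Finset Pt) (P : ι → Finset Pt) :
    Prop where
  box : IsBox X B
  isBox : ∀ i, IsBox X (P i)
  subset : ∀ i, P i ⊆ B
  cover : ∀ p ∈ B, ∃ i, p ∈ P i
  key_lt : ∀ i j, i < j → ∀ p ∈ P i, ∀ q ∈ P j, p.1 < q.1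

/-- The last time before `τ` at which `S` has a point whose key is a key of `C`; `⊥` if there is
none. -/
noncomputable def lastTouch (S : Finset Pt) (τ : ℤ) (C : Finset Pt) : WithBot ℤ :=
  {r ∈ S | r.2 < τ ∧ r.1 ∈ C.image Prod.fst}.sup fun r => (r.2 : WithBot ℤ)

/-- The parts of `P` that contain a key touched at time `t`. -/
noncomputable def touchedParts {ι : Type*} [Fintype ι] (G : Finset Pt) (P : ι → Finset Pt)
    (t : ℤ) : Finset ι :=
  {i | ∃ x ∈ P i, (x.1, t) ∈ G}

/-- From the first access in `B` until time `τ`, the accessed points of `X` are exactly those of the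
parts `P i` with `i ∈ s`: by then each part has been accessed completely or not at all. -/
def AccessedBefore {ι : Type*} (X B : Finset Pt) (P : ι → Finset Pt) (s : Finset ι) (τ : ℤ) :
    Prop :=
  ∀ p ∈ X, (TopPt B).2 ≤ p.2 → (p.2 < τ ↔ ∃ i ∈ s, p ∈ P i)

theorem le_lastTouch {S C : Finset Pt} {τ u : ℤ} {x : Pt} (hx : x ∈ C) (hu : u < τ)
    (hxu : (x.1, u) ∈ S) : (u : WithBot ℤ) ≤ lastTouch S τ C :=
  le_sup (f := fun r : Pt => (r.2 : WithBot ℤ))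
    (mem_filter.2 ⟨hxu, hu, mem_image.2 ⟨x, hx, rfl⟩⟩)

theorem lastTouch_le_iff {S C : Finset Pt} {τ : ℤ} {b : WithBot ℤ} :
    lastTouch S τ C ≤ b ↔ ∀ x ∈ C, ∀ u < τ, (x.1, u) ∈ S → (u : WithBot ℤ) ≤ b := by
  refine ⟨fun h x hx u hu hxu => (le_lastTouch hx hu hxu).trans h, fun h =>
    Finset.sup_le fun r hr => ?_⟩
  obtain ⟨hrS, hrτ, hrC⟩ := mem_filter.1 hr
  obtain ⟨x, hx, hxr⟩ := mem_image.1 hrC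
  exact h x hx r.2 hrτ (hxr ▸ hrS)

theorem lastTouch_lt_coe {S C : Finset Pt} {τ b : ℤ}
    (h : ∀ x ∈ C, ∀ u < τ, (x.1, u) ∈ S → u < b) : lastTouch S τ C < (b : WithBot ℤ) :=
  (lastTouch_le_iff (b := ((b - 1 : ℤ) : WithBot ℤ)).2 fun x hx u hu hxu =>
    WithBot.coe_le_coe.2 (Int.le_sub_one_of_lt (h x hx u hu hxu))).trans_lt
      (WithBot.coe_lt_coe.2 (sub_one_lt b))

theorem lastTouch_mono (S C : Finset Pt) {τ τ' : ℤ} (h : τ ≤ τ') :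
    lastTouch S τ C ≤ lastTouch S τ' C :=
  lastTouch_le_iff.2 fun _ hx _ hu hxu => le_lastTouch hx (hu.trans_le h) hxu

namespace IsBoxPartition

variable {ι : Type*} [LinearOrder ι] {X G B : Finset Pt} {P : ι → Finset Pt}

theorem eq_of_mem (hP : IsBoxPartition X B P) {i j : ι} {p : Pt} (hi : p ∈ P i) (hj : p ∈ P j) :
    i = j :=
  le_antisymm (le_of_not_gt fun hji => (hP.key_lt j i hji p hj p hi).false)
    (le_of_not_gt fun hij => (hP.key_lt i j hij p hi p hj).false)

theorem key_ne (hP : IsBoxPartition X B P) {i j : ι} (hij : i ≠ j) {p q : Pt} (hp : p ∈ P i)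
    (hq : q ∈ P j) : p.1 ≠ q.1 :=
  hij.lt_or_gt.elim (fun h => (hP.key_lt i j h p hp q hq).ne)
    fun h => (hP.key_lt j i h q hq p hp).ne'

theorem key_mem_uIcc (hP : IsBoxPartition X B P) {a i b : ι} (hi : i ∈ Set.uIcc a b)
    (hia : i ≠ a) (hib : i ≠ b) {p q r : Pt} (hp : p ∈ P a) (hq : q ∈ P i) (hr : r ∈ P b) :
    q.1 ∈ Set.uIcc p.1 r.1 :=
  Set.mem_uIcc.2 ((Set.mem_uIcc.1 hi).imp
    (fun h => ⟨(hP.key_lt a i (h.1.lt_of_ne hia.symm) p hp q hq).le,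
      (hP.key_lt i b (h.2.lt_of_ne hib) q hq r hr).le⟩)
    fun h => ⟨(hP.key_lt b i (h.1.lt_of_ne hib.symm) r hr q hq).le,
      (hP.key_lt i a (h.2.lt_of_ne hia) q hq p hp).le⟩)

theorem top_mem (hP : IsBoxPartition X B P) (i : ι) : TopPt (P i) ∈ P i :=
  (TopPt_spec (hP.isBox i).nonempty).1

theorem mem_of_mem_part (hP : IsBoxPartition X B P) {i : ι} {p : Pt} (hp : p ∈ P i) : p ∈ X :=
  (hP.isBox i).subset hp

theorem top_le (hP : IsBoxPartition X B P) {i : ι} {p : Pt} (hp : p ∈ P i) :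
    (TopPt B).2 ≤ p.2 :=
  (TopPt_spec hP.box.nonempty).2 p (hP.subset i hp)

theorem time_lt (hP : IsBoxPartition X B P) {i j : ι} (hij : i ≠ j)
    (hle : (TopPt (P i)).2 ≤ (TopPt (P j)).2) {p : Pt} (hp : p ∈ P i) :
    p.2 < (TopPt (P j)).2 :=
  lt_of_not_ge fun hjp => hij (hP.eq_of_mem
    ((hP.isBox i).time_convex _ (hP.mem_of_mem_part (hP.top_mem j)) _ (hP.top_mem i) p hp hle hjp)
    (hP.top_mem j))

theorem lt_iff_mem (hP : IsBoxPartition X B P) {s : Finset ι} {τ : ℤ}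
    (hs : AccessedBefore X B P s τ) {i : ι} {p : Pt} (hp : p ∈ P i) : p.2 < τ ↔ i ∈ s :=
  (hs p (hP.mem_of_mem_part hp) (hP.top_le hp)).trans
    ⟨fun ⟨_, hj, hpj⟩ => hP.eq_of_mem hp hpj ▸ hj, fun hi => ⟨i, hi, hp⟩⟩

theorem time_lt_of_mem_touchedParts [Fintype ι] (h : IsGreedy X G) (hP : IsBoxPartition X B P)
    {i j : ι} (hi : i ∈ touchedParts G P (TopPt (P j)).2) {p : Pt} (hp : p ∈ P i) :
    p.2 < (TopPt (P j)).2 := by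
  obtain ⟨x, hx, hxG⟩ := (mem_filter_univ i).1 hi
  obtain ⟨y, hy, hyx, hyt⟩ := h.exists_origin hxG
  obtain rfl := h.key_inj hy (hP.mem_of_mem_part hx) hyx
  refine hP.time_lt ?_ (((TopPt_spec (hP.isBox i).nonempty).2 y hx).trans hyt.le) hp
  rintro rfl
  exact ((TopPt_spec (hP.isBox i).nonempty).2 y hx).not_gt hyt

theorem mem_reach_of_mem_touchedParts [Fintype ι] (h : IsGreedy X G) (hP : IsBoxPartition X B P)
    {s : Finset ι} {i j : ι} (hj : j ∉ s) (hi : i ∈ touchedParts G P (TopPt (P j)).2) :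
    j ∈ reach s (fun i => lastTouch (X ∪ G) (TopPt (P j)).2 (P i)) i := by
  obtain ⟨x, hx, hxG⟩ := (mem_filter_univ i).1 hi
  obtain ⟨p, hp, hpt, -, v, hv, hxv, hlast⟩ := (h.mem_iff _ _).1 hxG
  obtain rfl := h.time_inj hp (hP.mem_of_mem_part (hP.top_mem j)) hpt
  refine mem_reach.2 fun z hz hzi hzj => (lastTouch_lt_coe fun y hy u hu hyu => ?_).trans_le
    (le_lastTouch hx hv hxv)
  have hzj' : z ≠ j := fun hzj => hj (hzj ▸ hz)
  exact hlast y.1 (hP.key_mem_uIcc hzj hzj' hzi (hP.top_mem j) hy hx) (hP.key_ne hzi hy hx) u hu hyu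

section Stage

variable {s : Finset ι} {j : ι} {τ : ℤ}

theorem top_lt (hP : IsBoxPartition X B P) (hafter : AccessedBefore X B P (insert j s) τ) :
    (TopPt (P j)).2 < τ :=
  (hP.lt_iff_mem hafter (hP.top_mem j)).2 (mem_insert_self j s)

theorem mem_part_of_lt (hP : IsBoxPartition X B P)
    (hbefore : AccessedBefore X B P s (TopPt (P j)).2)
    (hafter : AccessedBefore X B P (insert j s) τ) {p : Pt} (hp : p ∈ X)
    (hjp : (TopPt (P j)).2 ≤ p.2) (hpτ : p.2 < τ) : p ∈ P j := by
  obtain ⟨i, hi, hpi⟩ := (hafter p hp ((hP.top_le (hP.top_mem j)).trans hjp)).1 hpτ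
  rcases mem_insert.1 hi with rfl | his
  · exact hpi
  · exact absurd ((hP.lt_iff_mem hbefore hpi).2 his) hjp.not_gt

theorem mem_greedy_of_touched_during (h : IsGreedy X G) (hP : IsBoxPartition X B P)
    (hbefore : AccessedBefore X B P s (TopPt (P j)).2)
    (hafter : AccessedBefore X B P (insert j s) τ) {i : ι} (hij : i ≠ j) {x : Pt} (hx : x ∈ P i)
    {u : ℤ} (hxu : (x.1, u) ∈ X ∪ G) (hju : (TopPt (P j)).2 ≤ u) (huτ : u < τ) :
    (x.1, u) ∈ G ∧ ∃ p ∈ P j, p.2 = u := by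
  rcases mem_union.1 hxu with hxX | hxG
  · exact (hP.key_ne hij hx (hP.mem_part_of_lt hbefore hafter hxX hju huτ) rfl).elim
  · obtain ⟨p, hp, rfl, -⟩ := (h.mem_iff _ _).1 hxG
    exact ⟨hxG, p, hP.mem_part_of_lt hbefore hafter hp hju huτ, rfl⟩

theorem lastTouch_eq_of_notMem_touchedParts [Fintype ι] (h : IsGreedy X G)
    (hP : IsBoxPartition X B P) (hbefore : AccessedBefore X B P s (TopPt (P j)).2)
    (hafter : AccessedBefore X B P (insert j s) τ) {i : ι} (hij : i ≠ j)
    (hi : i ∉ touchedParts G P (TopPt (P j)).2) :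
    lastTouch (X ∪ G) τ (P i) = lastTouch (X ∪ G) (TopPt (P j)).2 (P i) := by
  refine le_antisymm (lastTouch_le_iff.2 fun x hx u hu hxu => le_lastTouch hx ?_ hxu)
    (lastTouch_mono _ _ (hP.top_lt hafter).le)
  by_contra! hju
  obtain ⟨hxG, p, hp, rfl⟩ := hP.mem_greedy_of_touched_during h hbefore hafter hij hx hxu hju hu
  exact hi ((mem_filter_univ i).2 ⟨x, hx, h.mem_top_of_mem_box (hP.isBox j) hp hxG fun b hb =>
    hP.key_ne hij.symm hb hx⟩)

theorem lastTouch_le_top_of_between (h : IsGreedy X G)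
    (hP : IsBoxPartition X B P) (hj : j ∉ s) (hbefore : AccessedBefore X B P s (TopPt (P j)).2)
    (hafter : AccessedBefore X B P (insert j s) τ) {i l : ι} (hi : i ∈ s) (hl : l ∈ s)
    (hli : l ≠ i) (hlj : l ∈ Set.uIcc j i) :
    lastTouch (X ∪ G) τ (P i) ≤ (TopPt (P j)).2 := by
  have hs : ∀ {a}, a ∈ s → a ≠ j := fun ha haj => hj (haj ▸ ha)
  refine lastTouch_le_iff.2 fun x hx u hu hxu => WithBot.coe_le_coe.2 (le_of_not_gt fun hju => ?_)
  obtain ⟨hxG, p, hp, rfl⟩ :=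
    hP.mem_greedy_of_touched_during h hbefore hafter (hs hi) hx hxu hju.le hu
  exact hP.key_ne hli (hP.top_mem l) hx (h.eq_of_between_box (hP.isBox j) hp hju hxG
    (fun b hb => hP.key_ne (hs hi).symm hb hx) (hP.mem_of_mem_part (hP.top_mem l))
    ((hP.lt_iff_mem hbefore (hP.top_mem l)).2 hl)
    (hP.key_mem_uIcc hlj (hs hl) hli (hP.top_mem j) (hP.top_mem l) hx))

theorem two_mul_card_touchedParts_add_potential_le [Fintype ι] [LocallyFiniteOrder ι]
    (h : IsGreedy X G) (hP : IsBoxPartition X B P) (hj : j ∉ s)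
    (hbefore : AccessedBefore X B P s (TopPt (P j)).2)
    (hafter : AccessedBefore X B P (insert j s) τ) :
    2 * #(touchedParts G P (TopPt (P j)).2) +
        potential (insert j s) (fun i => lastTouch (X ∪ G) τ (P i)) ≤
      potential s (fun i => lastTouch (X ∪ G) (TopPt (P j)).2 (P i)) + 8 +
        9 * Real.logb 2 (Fintype.card ι) := by
  have hTs : touchedParts G P (TopPt (P j)).2 ⊆ s := fun i hi =>
    (hP.lt_iff_mem hbefore (hP.top_mem i)).1 (hP.time_lt_of_mem_touchedParts h hi (hP.top_mem i))
  refine two_mul_card_add_potential_le hj hTs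
    (fun i hi => hP.mem_reach_of_mem_touchedParts h hj hi)
    (fun i _ => lastTouch_mono _ _ (hP.top_lt hafter).le)
    (fun i hi hiT => hP.lastTouch_eq_of_notMem_touchedParts h hbefore hafter
      (fun hij => hj (hij ▸ hi)) hiT)
    fun x hx z hz hzx hzj y hy => ?_
  obtain ⟨w, hw, hwG⟩ := (mem_filter_univ y).1 hy
  exact (hP.lastTouch_le_top_of_between h hj hbefore hafter (hTs hx) (hTs hz) hzx hzj).trans
    (le_lastTouch hw (hP.top_lt hafter) (mem_union_right X hwG))

end Stage

theorem accessedBefore_top (hP : IsBoxPartition X B P) {s : Finset ι} {j : ι} {τ : ℤ}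
    (hj : j ∉ s) (hmax : ∀ i ∈ s, (TopPt (P i)).2 ≤ (TopPt (P j)).2)
    (hafter : AccessedBefore X B P (insert j s) τ) :
    AccessedBefore X B P s (TopPt (P j)).2 := by
  intro p hp hBp
  constructor
  · intro hpj
    obtain ⟨i, hi, hpi⟩ := (hafter p hp hBp).1 (hpj.trans (hP.top_lt hafter))
    rcases mem_insert.1 hi with rfl | his
    · exact absurd hpj ((TopPt_spec (hP.isBox i).nonempty).2 p hpi).not_gt
    · exact ⟨i, his, hpi⟩
  · rintro ⟨i, his, hpi⟩
    exact hP.time_lt (ne_of_mem_of_not_mem his hj) (hmax i his) hpi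

theorem exists_accessedBefore_univ [Fintype ι] (hP : IsBoxPartition X B P) :
    ∃ τ, AccessedBefore X B P univ τ := by
  obtain ⟨e, he, hemax⟩ := exists_max_image B Prod.snd hP.box.nonempty
  refine ⟨e.2 + 1, fun p hp hBp => ⟨fun hpe => ?_, fun ⟨i, _, hpi⟩ =>
    Int.lt_add_one_iff.2 (hemax p (hP.subset i hpi))⟩⟩
  obtain ⟨i, hi⟩ := hP.cover p (hP.box.time_convex p hp _ (TopPt_spec hP.box.nonempty).1 e he hBp
    (Int.lt_add_one_iff.1 hpe))
  exact ⟨i, mem_univ i, hi⟩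

theorem sum_touchedParts_add_potential_le [Fintype ι] [LocallyFiniteOrder ι] (h : IsGreedy X G)
    (hP : IsBoxPartition X B P) (s : Finset ι) {τ : ℤ} (hs : AccessedBefore X B P s τ) :
    ∑ i ∈ s, 2 * (#(touchedParts G P (TopPt (P i)).2) : ℝ) +
        potential s (fun i => lastTouch (X ∪ G) τ (P i)) ≤
      #s * (8 + 9 * Real.logb 2 (Fintype.card ι)) := by
  induction s using Finset.induction_on_max_value (fun i => (TopPt (P i)).2) generalizing τ with
  | empty => simp [potential]
  | insert j s hj hmax ih =>
    have hbefore := hP.accessedBefore_top hj hmax hs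
    have hstep := hP.two_mul_card_touchedParts_add_potential_le h hj hbefore hs
    have hprev := ih hbefore
    rw [sum_insert hj, card_insert_of_notMem hj]
    push_cast
    linarith

theorem sum_touchedParts_le [Fintype ι] [LocallyFiniteOrder ι] (h : IsGreedy X G)
    (hP : IsBoxPartition X B P) :
    ∑ i, 2 * (#(touchedParts G P (TopPt (P i)).2) : ℝ) ≤
      Fintype.card ι * (8 + 9 * Real.logb 2 (Fintype.card ι)) := by
  obtain ⟨τ, hτ⟩ := hP.exists_accessedBefore_univ
  exact (le_add_of_nonneg_right (potential_nonneg _ _)).trans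
    (hP.sum_touchedParts_add_potential_le h univ hτ)

end IsBoxPartition

/-- The keys touched at time `t` that are touched again later. -/
noncomputable def nonfinal (G : Finset Pt) (t : ℤ) : Finset ℤ :=
  {x ∈ G.image Prod.fst | (x, t) ∈ G ∧ ∃ u, t < u ∧ (x, u) ∈ G}

theorem mem_nonfinal {G : Finset Pt} {t x : ℤ} :
    x ∈ nonfinal G t ↔ (x, t) ∈ G ∧ ∃ u, t < u ∧ (x, u) ∈ G :=
  mem_filter.trans (and_iff_right_of_imp fun hx => mem_image_of_mem Prod.fst hx.1)

theorem IsGreedy.card_nonfinal_outside_le {X G B : Finset Pt} (h : IsGreedy X G)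
    (hB : IsBox X B) {p : Pt} (hp : p ∈ B) (htop : (TopPt B).2 < p.2) :
    #{x ∈ nonfinal G p.2 | ∀ b ∈ B, b.1 ≠ x} ≤ 2 := by
  refine card_le_two_of_forall_not_lt_lt fun x hx y hy z hz hxy hyz => ?_
  obtain ⟨hxG, hxB⟩ := mem_filter.1 hx
  obtain ⟨hyG, hyB⟩ := mem_filter.1 hy
  obtain ⟨hzG, hzB⟩ := mem_filter.1 hz
  obtain ⟨w, hw, rfl, hwB⟩ := h.exists_origin_before_box hB hp (mem_nonfinal.1 hyG).1 hyB
  rcases le_total w.1 (TopPt B).1 with hwtop | hwtop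
  · exact hxy.ne' (h.eq_of_between_box hB hp htop (mem_nonfinal.1 hxG).1 hxB hw hwB
      (Set.mem_uIcc.2 (Or.inr ⟨hxy.le, hwtop⟩)))
  · exact hyz.ne (h.eq_of_between_box hB hp htop (mem_nonfinal.1 hzG).1 hzB hw hwB
      (Set.mem_uIcc.2 (Or.inl ⟨hwtop, hyz.le⟩)))

theorem IsGreedy.card_nonfinal_inside_le {X G C : Finset Pt} (h : IsGreedy X G)
    (hC : IsBox X C) {t : ℤ} (hCt : ∀ c ∈ C, c.2 < t) :
    #{x ∈ nonfinal G t | ∃ c ∈ C, c.1 = x} ≤ 2 := by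
  refine card_le_two_of_forall_not_lt_lt fun x hx y hy z hz hxy hyz => ?_
  obtain ⟨hxG, a, ha, rfl⟩ := mem_filter.1 hx
  obtain ⟨hyG, b, hb, rfl⟩ := mem_filter.1 hy
  obtain ⟨hzG, c, hc, rfl⟩ := mem_filter.1 hz
  obtain ⟨-, u, htu, hu⟩ := mem_nonfinal.1 hyG
  exact h.not_touched_of_between hC ha hb hc hCt (mem_nonfinal.1 hxG).1 (mem_nonfinal.1 hzG).1
    hxy hyz hu htu

namespace IsBoxPartition

variable {ι : Type*} [LinearOrder ι] [Fintype ι] {X G B : Finset Pt} {P : ι → Finset Pt}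

theorem card_nonfinal_le (h : IsGreedy X G) (hP : IsBoxPartition X B P) {j : ι}
    (hj : TopPt B ∉ P j) :
    #(nonfinal G (TopPt (P j)).2) ≤ 2 + 2 * #(touchedParts G P (TopPt (P j)).2) := by
  have htop : (TopPt B).2 < (TopPt (P j)).2 :=
    (hP.top_le (hP.top_mem j)).lt_of_ne fun heq => hj (h.time_inj
      (hP.box.subset (TopPt_spec hP.box.nonempty).1) (hP.mem_of_mem_part (hP.top_mem j)) heq ▸
        hP.top_mem j)
  set t := (TopPt (P j)).2
  have hsplit : nonfinal G t ⊆ {x ∈ nonfinal G t | ∀ b ∈ B, b.1 ≠ x} ∪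
      (touchedParts G P t).biUnion fun i => {x ∈ nonfinal G t | ∃ c ∈ P i, c.1 = x} := by
    intro x hx
    by_cases hxB : ∀ b ∈ B, b.1 ≠ x
    · exact mem_union_left _ (mem_filter.2 ⟨hx, hxB⟩)
    · push Not at hxB
      obtain ⟨b, hb, rfl⟩ := hxB
      obtain ⟨i, hi⟩ := hP.cover b hb
      exact mem_union_right _ (mem_biUnion.2 ⟨i, (mem_filter_univ i).2
        ⟨b, hi, (mem_nonfinal.1 hx).1⟩, mem_filter.2 ⟨hx, b, hi, rfl⟩⟩)
  calc #(nonfinal G t)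
      ≤ _ := (card_le_card hsplit).trans (card_union_le _ _)
    _ ≤ 2 + #(touchedParts G P t) * 2 := add_le_add
        (h.card_nonfinal_outside_le hP.box (hP.subset j (hP.top_mem j)) htop)
        (card_biUnion_le_card_mul _ _ _ fun i hi => h.card_nonfinal_inside_le (hP.isBox i)
          fun _ hc => hP.time_lt_of_mem_touchedParts h hi hc)
    _ = 2 + 2 * #(touchedParts G P t) := by rw [mul_comm]

theorem sum_nonfinal_le [LocallyFiniteOrder ι] (h : IsGreedy X G) (hP : IsBoxPartition X B P)
    (hι : 2 ≤ Fintype.card ι) :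
    ∑ i, (#(nonfinal G (TopPt (P i)).2) : ℝ) ≤
      #(nonfinal G (TopPt B).2) +
        (Fintype.card ι - 1) * (36 * Real.logb 2 (Fintype.card ι)) := by
  have hBtop := (TopPt_spec hP.box.nonempty).1
  obtain ⟨i₀, hi₀⟩ := hP.cover _ hBtop
  have htop : (TopPt (P i₀)).2 = (TopPt B).2 :=
    le_antisymm ((TopPt_spec (hP.isBox i₀).nonempty).2 _ hi₀) (hP.top_le (hP.top_mem i₀))
  have hrest : ∑ i ∈ univ.erase i₀, (#(nonfinal G (TopPt (P i)).2) : ℝ) ≤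
      (Fintype.card ι - 1) * 2 +
        ∑ i ∈ univ.erase i₀, 2 * (#(touchedParts G P (TopPt (P i)).2) : ℝ) := by
    have hcard : (#(univ.erase i₀) : ℝ) = Fintype.card ι - 1 :=
      cast_card_erase_of_mem (mem_univ i₀)
    rw [← hcard, ← nsmul_eq_mul, ← sum_const, ← sum_add_distrib]
    refine sum_le_sum fun i hi => ?_
    exact_mod_cast hP.card_nonfinal_le h fun hBi => ne_of_mem_erase hi (hP.eq_of_mem hBi hi₀)
  have htouched : ∑ i ∈ univ.erase i₀, 2 * (#(touchedParts G P (TopPt (P i)).2) : ℝ) ≤ _ :=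
    (sum_le_sum_of_subset_of_nonneg (erase_subset _ _) fun _ _ _ => by positivity).trans
      (hP.sum_touchedParts_le h)
  have hm : (2 : ℝ) ≤ Fintype.card ι := Nat.ofNat_le_cast.2 hι
  have hlog := one_le_logb_two hm
  rw [← add_sum_erase _ _ (mem_univ i₀), htop]
  nlinarith [mul_nonneg (sub_nonneg.2 hm) (sub_nonneg.2 hlog)]

theorem sum_eq_sum_parts (hP : IsBoxPartition X B P) (f : Pt → ℝ) :
    ∑ p ∈ B, f p = ∑ i, ∑ p ∈ P i, f p := by
  have hB : B = univ.biUnion P := by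
    ext p
    simp only [mem_biUnion, mem_univ, true_and]
    exact ⟨hP.cover p, fun ⟨i, hi⟩ => hP.subset i hi⟩
  rw [hB, sum_biUnion fun i _ j _ hij => disjoint_left.2 fun p hi hj => hij (hP.eq_of_mem hi hj)]

end IsBoxPartition

theorem IsBox.key_lt {X C D : Finset Pt} (hC : IsBox X C) (hD : IsBox X D) (hCD : Disjoint C D)
    {c d c' d' : Pt} (hc : c ∈ C) (hd : d ∈ D) (hcd : c.1 < d.1) (hc' : c' ∈ C) (hd' : d' ∈ D) :
    c'.1 < d'.1 := by
  by_contra! hdc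
  rcases le_or_gt d.1 c'.1 with hle | hlt
  · exact disjoint_right.1 hCD hd
      (hC.key_convex d (hD.subset hd) c hc c' hc' (Set.mem_uIcc.2 (Or.inl ⟨hcd.le, hle⟩)))
  · exact disjoint_left.1 hCD hc'
      (hD.key_convex c' (hC.subset hc') d' hd' d hd (Set.mem_uIcc.2 (Or.inl ⟨hdc, hlt.le⟩)))

theorem IsBlock.isBox {X B : Finset Pt} (hX : Set.InjOn Prod.fst (X : Set Pt))
    (hB : IsBlock X B) : IsBox X B := by
  obtain ⟨hne, ⟨i, j, rfl⟩, c, d, hcd⟩ := hB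
  refine ⟨hne, filter_subset _ _, fun p hp q hq r hr hqp hpr => mem_filter.2
      ⟨hp, (mem_filter.1 hq).2.1.trans hqp, hpr.trans (mem_filter.1 hr).2.2⟩,
    fun p hp q hq r hr hpqr => ?_⟩
  have hkeys : ∀ b ∈ X.filter (fun p => i ≤ p.2 ∧ p.2 ≤ j), b.1 ∈ Set.Icc c d := fun b hb =>
    mem_Icc.1 (hcd ▸ mem_image_of_mem Prod.fst hb)
  have hpcd : p.1 ∈ Icc c d := mem_Icc.2 (Set.uIcc_subset_Icc (hkeys q hq) (hkeys r hr) hpqr)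
  obtain ⟨b, hb, hbp⟩ := mem_image.1 (hcd ▸ hpcd)
  exact hX (mem_filter.1 hb).1 hp hbp ▸ hb

namespace DecompTree

variable {X G B C D : Finset Pt}

theorem mem_children (T : DecompTree X) :
    C ∈ T.children B ↔ C ∈ T.nodes ∧ C ≠ X ∧ T.parent C = B :=
  mem_filter

theorem ssubset_of_mem_children (T : DecompTree X) (hC : C ∈ T.children B) : C ⊂ B := by
  obtain ⟨hC', hCX, rfl⟩ := T.mem_children.1 hC
  exact T.ssubset_parent C hC' hCX

theorem exists_mem_children (T : DecompTree X) (hB : B ∈ T.nodes) (hcard : #B ≠ 1) {p : Pt}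
    (hp : p ∈ B) : ∃ C ∈ T.children B, p ∈ C := by
  obtain ⟨C, ⟨hC, hCX, hCB, hpC⟩, -⟩ := T.children_partition B hB hcard p hp
  exact ⟨C, T.mem_children.2 ⟨hC, hCX, hCB⟩, hpC⟩

theorem disjoint_of_mem_children (T : DecompTree X) (hC : C ∈ T.children B)
    (hD : D ∈ T.children B) (hCD : C ≠ D) : Disjoint C D := by
  refine disjoint_left.2 fun p hpC hpD => hCD ?_
  have hpB : p ∈ B := (T.ssubset_of_mem_children hC).1 hpC
  obtain ⟨hCT, hCX, hCB⟩ := T.mem_children.1 hC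
  obtain ⟨hDT, hDX, hDB⟩ := T.mem_children.1 hD
  have hB : B ∈ T.nodes := hCB ▸ T.parent_mem C hCT hCX
  have hcard : #B ≠ 1 := fun h => (T.leaf_iff B hB).2 h ⟨C, hCT, hCX, hCB⟩
  exact (T.children_partition B hB hcard p hpB).unique ⟨hCT, hCX, hCB, hpC⟩ ⟨hDT, hDX, hDB, hpD⟩

theorem two_le_card_children (T : DecompTree X) (hB : B ∈ T.nodes) (hcard : #B ≠ 1) :
    2 ≤ #(T.children B) := by
  obtain ⟨p, hp⟩ := (T.isBlock_nodes B hB).1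
  obtain ⟨C, hC, -⟩ := T.exists_mem_children hB hcard hp
  obtain ⟨q, hqB, hqC⟩ := exists_of_ssubset (T.ssubset_of_mem_children hC)
  obtain ⟨D, hD, hqD⟩ := T.exists_mem_children hB hcard hqB
  exact one_lt_card.2 ⟨C, hC, D, hD, fun hCD => hqC (hCD ▸ hqD)⟩

theorem exists_isBoxPartition (hX : Set.InjOn Prod.fst (X : Set Pt)) (T : DecompTree X)
    (hB : B ∈ T.nodes) (hcard : #B ≠ 1) :
    ∃ P : Fin #(T.children B) → Finset Pt, IsBoxPartition X B P ∧ ∀ i, P i ∈ T.children B := by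
  have hbox : ∀ C ∈ T.children B, IsBox X C := fun C hC =>
    (T.isBlock_nodes C (T.mem_children.1 hC).1).isBox hX
  have htop : ∀ C ∈ T.children B, TopPt C ∈ C := fun C hC => (TopPt_spec (hbox C hC).nonempty).1
  have htop_inj : Set.InjOn (fun C => (TopPt C).1) (T.children B : Set (Finset Pt)) := by
    intro C hC D hD hkey
    by_contra hCD
    exact disjoint_left.1 (T.disjoint_of_mem_children hC hD hCD) (htop C hC)
      (hX ((hbox C hC).subset (htop C hC)) ((hbox D hD).subset (htop D hD)) hkey ▸ htop D hD)
  obtain ⟨x, hx, hxB⟩ := exists_strictMonoOn_enum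
    (card_pos.1 (two_pos.trans_le (T.two_le_card_children hB hcard))) htop_inj
  have hmem : ∀ i : Fin #(T.children B), x i ∈ T.children B := fun i =>
    hxB.subset (mem_image_of_mem x (mem_range.2 i.2))
  refine ⟨fun i => x i, ⟨(T.isBlock_nodes B hB).isBox hX, fun i => hbox _ (hmem i),
    fun i => (T.ssubset_of_mem_children (hmem i)).1, fun p hp => ?_,
    fun i j hij p hp q hq => ?_⟩, hmem⟩
  · obtain ⟨C, hC, hpC⟩ := T.exists_mem_children hB hcard hp
    obtain ⟨i, hi, rfl⟩ := mem_image.1 (hxB ▸ hC)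
    exact ⟨⟨i, mem_range.1 hi⟩, hpC⟩
  · have hlt : (TopPt (x i)).1 < (TopPt (x j)).1 := hx i.2 j.2 hij
    have hdisj := T.disjoint_of_mem_children (hmem i) (hmem j) fun h => (h ▸ hlt).false
    exact (hbox _ (hmem i)).key_lt (hbox _ (hmem j)) hdisj (htop _ (hmem i)) (htop _ (hmem j))
      hlt hp hq

theorem sum_nonfinal_le (h : IsGreedy X G) (T : DecompTree X) {k : ℕ}
    (hT : ∀ B ∈ T.nodes, #(T.children B) ≤ k) (hB : B ∈ T.nodes) :
    ∑ p ∈ B, (#(nonfinal G p.2) : ℝ) ≤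
      #(nonfinal G (TopPt B).2) + (#B - 1) * (36 * Real.logb 2 k) := by
  induction B using Finset.strongInduction with | H B ih
  by_cases hcard : #B = 1
  · obtain ⟨p, rfl⟩ := card_eq_one.1 hcard
    have htop : TopPt {p} = p := mem_singleton.1 (TopPt_spec (singleton_nonempty p)).1
    simp [htop]
  obtain ⟨P, hP, hPB⟩ := T.exists_isBoxPartition h.key_inj hB hcard
  have hm := T.two_le_card_children hB hcard
  have hnode := hP.sum_nonfinal_le h (hm.trans_eq (Fintype.card_fin _).symm)
  rw [Fintype.card_fin] at hnode
  have hlog : Real.logb 2 #(T.children B) ≤ Real.logb 2 k :=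
    Real.logb_le_logb_of_le one_lt_two (by positivity) (Nat.cast_le.2 (hT B hB))
  have hcardB : (#B : ℝ) = ∑ i, (#(P i) : ℝ) := by
    simpa only [Pi.one_apply, sum_const, nsmul_one] using hP.sum_eq_sum_parts 1
  calc ∑ p ∈ B, (#(nonfinal G p.2) : ℝ)
      = ∑ i, ∑ p ∈ P i, (#(nonfinal G p.2) : ℝ) := hP.sum_eq_sum_parts _
    _ ≤ ∑ i, (#(nonfinal G (TopPt (P i)).2) + (#(P i) - 1) * (36 * Real.logb 2 k)) :=
        sum_le_sum fun i _ => ih _ (T.ssubset_of_mem_children (hPB i))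
          (T.mem_children.1 (hPB i)).1
    _ = ∑ i, (#(nonfinal G (TopPt (P i)).2) : ℝ) +
          (#B - #(T.children B)) * (36 * Real.logb 2 k) := by
        rw [sum_add_distrib, ← sum_mul, sum_sub_distrib, ← hcardB, sum_const, card_univ,
          Fintype.card_fin, nsmul_one]
    _ ≤ #(nonfinal G (TopPt B).2) + (#(T.children B) - 1) * (36 * Real.logb 2 k) +
          (#B - #(T.children B)) * (36 * Real.logb 2 k) := by
        gcongr
        refine hnode.trans ?_
        gcongr
        exact sub_nonneg.2 (Nat.one_le_cast.2 (one_le_two.trans hm))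
    _ = #(nonfinal G (TopPt B).2) + (#B - 1) * (36 * Real.logb 2 k) := by ring

end DecompTree

namespace IsGreedy

variable {X G : Finset Pt}

theorem card_final_le (h : IsGreedy X G) :
    #{r ∈ G | ∀ u, r.2 < u → (r.1, u) ∉ G} ≤ #X := by
  refine (card_le_card_of_injOn (t := X.image Prod.fst) Prod.fst (fun r hr => ?_)
    fun r hr r' hr' hrr' => ?_).trans card_image_le
  · obtain ⟨y, hy, hyr, -⟩ := h.exists_origin (mem_filter.1 hr).1
    exact mem_image.2 ⟨y, hy, hyr⟩
  · obtain ⟨hrG, hrfin⟩ := mem_filter.1 hr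
    obtain ⟨hrG', hrfin'⟩ := mem_filter.1 hr'
    refine Prod.ext hrr' (le_antisymm (le_of_not_gt fun hlt => hrfin' r.2 hlt (hrr' ▸ hrG))
      (le_of_not_gt fun hlt => hrfin r'.2 hlt (hrr' ▸ hrG')))

theorem card_le (h : IsGreedy X G) : #G ≤ #X + ∑ p ∈ X, #(nonfinal G p.2) := by
  have hsub : G ⊆ {r ∈ G | ∀ u, r.2 < u → (r.1, u) ∉ G} ∪
      X.biUnion fun p => (nonfinal G p.2).image fun x => (x, p.2) := by
    intro r hr
    by_cases hfin : ∀ u, r.2 < u → (r.1, u) ∉ G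
    · exact mem_union_left _ (mem_filter.2 ⟨hr, hfin⟩)
    · push Not at hfin
      obtain ⟨p, hp, hpr, -⟩ := (h.mem_iff r.1 r.2).1 hr
      exact mem_union_right _ (mem_biUnion.2 ⟨p, hp, mem_image.2
        ⟨r.1, mem_nonfinal.2 (hpr ▸ ⟨hr, hfin⟩), Prod.ext rfl hpr⟩⟩)
  calc #G ≤ _ := (card_le_card hsub).trans (card_union_le _ _)
    _ ≤ #X + ∑ p ∈ X, #(nonfinal G p.2) := add_le_add h.card_final_le
        (card_biUnion_le.trans (sum_le_sum fun _ _ => card_image_le))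

theorem nonfinal_top_eq_empty (h : IsGreedy X G) : nonfinal G (TopPt X).2 = ∅ := by
  refine eq_empty_of_forall_notMem fun x hx => ?_
  obtain ⟨y, hy, -, hlt⟩ := h.exists_origin (mem_nonfinal.1 hx).1
  exact ((TopPt_spec ⟨y, hy⟩).2 y hy).not_gt hlt

end IsGreedy

theorem touches_iff_exists_empty_rectangle {S : Finset Pt} {p : Pt} {x : ℤ} :
    Touches S p x ↔ ∃ q ∈ S, q.2 < p.2 ∧ q.1 = x ∧ q.1 ≠ p.1 ∧
      ∀ w ∈ S, w.2 < p.2 → inRect p q w → w = q := by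
  constructor
  · rintro ⟨hpx, s, hsp, hs, hlast⟩
    obtain ⟨q, hq, hqmax⟩ := exists_max_image {w ∈ S | w.1 = x ∧ w.2 < p.2} Prod.snd
      ⟨(x, s), mem_filter.2 ⟨hs, rfl, hsp⟩⟩
    obtain ⟨hqS, rfl, hqp⟩ := mem_filter.1 hq
    have hsq : s ≤ q.2 := hqmax (q.1, s) (mem_filter.2 ⟨hs, rfl, hsp⟩)
    refine ⟨q, hqS, hqp, rfl, hpx.symm, fun w hw hwp ⟨hw₁, hw₂, hw₃, _⟩ => ?_⟩
    have hqw : q.2 ≤ w.2 := by omega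
    have hwq : w.1 = q.1 := by
      by_contra hne
      exact (hlast w.1 ⟨hw₁, hw₂⟩ hne w.2 hwp hw).not_ge (hsq.trans hqw)
    exact Prod.ext hwq (le_antisymm (hqmax w (mem_filter.2 ⟨hw, hwq, hwp⟩)) hqw)
  · rintro ⟨q, hq, hqp, rfl, hqne, hempty⟩
    refine ⟨hqne.symm, q.2, hqp, hq, fun y hy hyq u hu hyu => lt_of_not_ge fun hqu => hyq ?_⟩
    exact congrArg Prod.fst (hempty (y, u) hyu hu
      ⟨hy.1, hy.2, (min_le_right _ _).trans hqu, hu.le.trans (le_max_left _ _)⟩)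

theorem mem_greedyStep {X G : Finset Pt} {x t u : ℤ} :
    (x, u) ∈ greedyStep X G t ↔ u = t ∧ ∃ p ∈ X, p.2 = t ∧ Touches (X ∪ G) p x := by
  simp only [greedyStep, mem_biUnion, mem_image, mem_filter, Prod.mk.injEq,
    touches_iff_exists_empty_rectangle]
  constructor
  · rintro ⟨p, ⟨hp, rfl⟩, q, ⟨⟨hq, hqp⟩, hne, hempty⟩, hqx, rfl⟩
    exact ⟨rfl, p, hp, rfl, q, hq, hqp, hqx, hne, fun w hw hwp => hempty w ⟨hw, hwp⟩⟩
  · rintro ⟨rfl, p, hp, rfl, q, hq, hqp, hqx, hne, hempty⟩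
    exact ⟨p, ⟨hp, rfl⟩, q, ⟨⟨hq, hqp⟩, hne, fun w hw => hempty w hw.1 hw.2⟩, hqx, rfl⟩

theorem mem_greedyUpTo {X : Finset Pt} {n : ℕ} {r : Pt} :
    r ∈ greedyUpTo X n ↔ ∃ t < n, r ∈ greedyStep X (greedyUpTo X t) (t + 1) := by
  induction n with
  | zero => simp [greedyUpTo]
  | succ n ih => simp only [greedyUpTo, mem_union, ih, Nat.exists_lt_succ_right]

theorem mem_union_greedyUpTo_iff {X : Finset Pt} {t n : ℕ} (htn : t ≤ n) {r : Pt}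
    (hr : r.2 < (t : ℤ) + 1) : r ∈ X ∪ greedyUpTo X t ↔ r ∈ X ∪ greedyUpTo X n := by
  simp only [mem_union, mem_greedyUpTo (n := t), mem_greedyUpTo (n := n)]
  refine or_congr_right ⟨fun ⟨u, hu, h⟩ => ⟨u, hu.trans_le htn, h⟩, fun ⟨u, _, h⟩ => ⟨u, ?_, h⟩⟩
  have hru : r.2 = u + 1 := (mem_greedyStep.1 h).1
  omega

theorem touches_congr {S S' : Finset Pt} {p : Pt} {x : ℤ}
    (h : ∀ r : Pt, r.2 < p.2 → (r ∈ S ↔ r ∈ S')) : Touches S p x ↔ Touches S' p x := by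
  refine and_congr_right fun _ => exists_congr fun s => and_congr_right fun hs =>
    and_congr (h (x, s) hs) (forall₂_congr fun y _ => ?_)
  exact forall₃_congr fun _ u hu => imp_congr_left (h (y, u) hu)

namespace IsPermPointSet

variable {n : ℕ} {X : Finset Pt}

theorem isGreedy (hX : IsPermPointSet n X) : IsGreedy X (greedyG n X) := by
  obtain ⟨σ, hσ⟩ := hX
  have hmem : ∀ p ∈ X, ∃ t : Fin n, (((σ t : ℕ) : ℤ) + 1, ((t : ℕ) : ℤ) + 1) = p := fun p hp => by
    simpa [hσ] using hp
  have hstep : ∀ (t : Fin n) (p : Pt) (x : ℤ), p.2 = (t : ℕ) + 1 →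
      (Touches (X ∪ greedyUpTo X t) p x ↔ Touches (X ∪ greedyG n X) p x) := fun t p x hp =>
    touches_congr fun r hr => mem_union_greedyUpTo_iff t.2.le (hp ▸ hr)
  refine ⟨fun p hp q hq hpq => ?_, fun p hp q hq hpq => ?_, fun x u => ⟨fun hx => ?_, ?_⟩⟩
  · obtain ⟨t, rfl⟩ := hmem p hp
    obtain ⟨u, rfl⟩ := hmem q hq
    have htu : t = u := σ.injective (Fin.ext (by dsimp only at hpq; omega))
    rw [htu]
  · obtain ⟨t, rfl⟩ := hmem p hp
    obtain ⟨u, rfl⟩ := hmem q hq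
    have htu : t = u := Fin.ext (by dsimp only at hpq; omega)
    rw [htu]
  · obtain ⟨t, ht, hxt⟩ := mem_greedyUpTo.1 hx
    obtain ⟨rfl, p, hp, hpt, hpx⟩ := mem_greedyStep.1 hxt
    exact ⟨p, hp, hpt, (hstep ⟨t, ht⟩ p x hpt).1 hpx⟩
  · rintro ⟨p, hp, rfl, hpx⟩
    obtain ⟨t, rfl⟩ := hmem p hp
    exact mem_greedyUpTo.2 ⟨t, t.2, mem_greedyStep.2 ⟨rfl, _, hp, rfl, (hstep t _ x rfl).2 hpx⟩⟩

theorem card_eq (hX : IsPermPointSet n X) : #X = n := by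
  obtain ⟨σ, rfl⟩ := hX
  rw [card_image_of_injective, card_univ, Fintype.card_fin]
  intro t u htu
  have htime := congrArg Prod.snd htu
  exact Fin.ext (by dsimp only at htime; omega)

end IsPermPointSet

theorem br_bound_general {k : ℕ} {X G : Finset Pt} (hk : 2 ≤ k) (h : IsGreedy X G)
    (hdec : kDecomposable k X) : (#G : ℝ) ≤ 37 * #X * Real.logb 2 k := by
  obtain ⟨T, hT⟩ := hdec
  have hlog : 1 ≤ Real.logb 2 k := one_le_logb_two (Nat.ofNat_le_cast.2 hk)
  have hroot := T.sum_nonfinal_le h hT T.root_mem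
  rw [h.nonfinal_top_eq_empty, card_empty, Nat.cast_zero, zero_add] at hroot
  have hG : (#G : ℝ) ≤ #X + ∑ p ∈ X, (#(nonfinal G p.2) : ℝ) := mod_cast h.card_le
  have hX : (#X : ℝ) ≤ #X * Real.logb 2 k := le_mul_of_one_le_right (Nat.cast_nonneg _) hlog
  linarith

/-- For every integer `k ≥ 2` and every `k`-decomposable permutation point
set `X` of size `n`, the set `BR` of points of `G` whose pair is a bad pair satisfies
`|BR| ≤ 80 · n · log₂ k`. -/
theorem br_bound (n k : ℕ) (X : Finset Pt) (hk : 2 ≤ k)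
    (hX : IsPermPointSet n X) (hdec : kDecomposable k X) :
    (((greedyG n X).filter (fun r => inMFC X (greedyG n X) r ∧
        ¬ IsGoodPair X (CP X (greedyG n X) r))).card : ℝ) ≤ 80 * n * Real.logb 2 k := by
  have hG := br_bound_general hk hX.isGreedy hdec
  rw [hX.card_eq] at hG
  have hlog : 0 ≤ Real.logb 2 k := Real.logb_nonneg one_lt_two (by exact_mod_cast by omega)
  exact (Nat.cast_le.2 (card_filter_le _ _)).trans (hG.trans (by gcongr; norm_num))
end

section
/- Let X be a permutation point set and let OPT(X) be a point set of minimum cardinality such that X ∪ OPT(X) is an arborally satisfied set. Then 2 · |X ∪ OPT(X)| ≥ |GR| + 2 · |X|, where GR is the set of points of G whose pair is a good pair. -/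
open Finset

attribute [local instance] Classical.propDecidable

/-!
Greedy never lets two of its good zag pairs with the same orientation overlap at a corner: the
earlier of the two processed points would have touched the key at which the later pair is realised.
So the good pairs of one orientation span an independent family of rectangles. In the widest
rectangle of an independent family some vertical line is crossed by no other member that reaches
it, while arboreal satisfaction yields two row neighbours around that line inside the rectangle.
Removing the widest rectangle repeatedly thus finds a new pair of row neighbours for each
rectangle, and the leftmost points of the `|X|` rows that meet `X` are not right ends of such pairs.
Hence each of the two orientations contributes at most `|X ∪ OPT(X)| - |X|` points to `GR`.
-/

/-! ### Row neighbours in arborally satisfied sets -/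

/-- `a` is the left neighbour of `b` in its row of `S`. -/
structure IsLeftNeighbour (S : Finset Pt) (a b : Pt) : Prop where
  left_mem : a ∈ S
  right_mem : b ∈ S
  time_eq : a.2 = b.2
  key_lt : a.1 < b.1
  key_le : ∀ s ∈ S, s.2 = b.2 → s.1 < b.1 → s.1 ≤ a.1

lemma IsLeftNeighbour.unique {S : Finset Pt} {a a' b : Pt} (h : IsLeftNeighbour S a b)
    (h' : IsLeftNeighbour S a' b) : a = a' :=
  Prod.ext (le_antisymm (h'.key_le a h.left_mem h.time_eq h.key_lt)
    (h.key_le a' h'.left_mem h'.time_eq h'.key_lt)) (h.time_eq.trans h'.time_eq.symm)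

lemma ArbSat.exists_isLeftNeighbour {S : Finset Pt} (hS : ArbSat S) {p q : Pt} (hp : p ∈ S)
    (hq : q ∈ S) (hqp : q.2 ≤ p.2) {c : ℤ} (hpc : p.1 ≤ c) (hcq : c < q.1) :
    ∃ a b, IsLeftNeighbour S a b ∧ p.1 ≤ a.1 ∧ a.1 ≤ c ∧ c < b.1 ∧ b.1 ≤ q.1 ∧
      q.2 ≤ b.2 ∧ b.2 ≤ p.2 := by
  -- The pair `(a, b)` spans a smallest rectangle among those crossing the line like `(p, q)` does.
  let C : Finset (Pt × Pt) := (S ×ˢ S).filter fun z =>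
    p.1 ≤ z.1.1 ∧ z.1.1 ≤ c ∧ c < z.2.1 ∧ z.2.1 ≤ q.1 ∧ q.2 ≤ z.2.2 ∧ z.2.2 ≤ z.1.2 ∧ z.1.2 ≤ p.2
  have hC : C.Nonempty := ⟨(p, q), by simp [C, hp, hq]; omega⟩
  obtain ⟨⟨a, b⟩, hab, hmin⟩ := C.exists_min_image (fun z => z.1.2 - z.2.2 + z.2.1 - z.1.1) hC
  simp only [C, mem_filter, mem_product] at hab hmin
  obtain ⟨⟨ha, hb⟩, hpa, hac, hcb, hbq, hqb, hba, hap⟩ := hab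
  have eq_or_eq : ∀ r ∈ S, a.1 ≤ r.1 → r.1 ≤ b.1 → b.2 ≤ r.2 → r.2 ≤ a.2 → r = a ∨ r = b := by
    intro r hr _ _ _ _
    rcases le_or_gt r.1 c with hrc | hrc
    · have := hmin (r, b) ⟨⟨hr, hb⟩, by dsimp only; omega⟩
      dsimp only at this
      exact .inl (Prod.ext (by omega) (by omega))
    · have := hmin (a, r) ⟨⟨ha, hr⟩, by dsimp only; omega⟩
      dsimp only at this
      exact .inr (Prod.ext (by omega) (by omega))
  have time_eq : a.2 = b.2 := by
    rcases hS a ha b hb with h | h | ⟨r, hr, hra, hrb, hrect⟩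
    · omega
    · exact h
    · unfold inRect at hrect
      exact absurd (eq_or_eq r hr (by omega) (by omega) (by omega) (by omega)) (by tauto)
  refine ⟨a, b, ⟨ha, hb, time_eq, by omega, fun s hs hsb hlt => ?_⟩, hpa, hac, hcb, hbq, hqb,
    by omega⟩
  by_contra! has
  rcases eq_or_eq s hs (by omega) (by omega) (by omega) (by omega) with rfl | rfl <;> omega

lemma exists_mem_row_forall_not_isLeftNeighbour {S : Finset Pt} {x : Pt} (hx : x ∈ S) :
    ∃ y ∈ S, y.2 = x.2 ∧ ∀ a, ¬ IsLeftNeighbour S a y := by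
  obtain ⟨y, hy, hmin⟩ := (S.filter fun s => s.2 = x.2).exists_min_image Prod.fst
    ⟨x, mem_filter.2 ⟨hx, rfl⟩⟩
  obtain ⟨hyS, hyx⟩ := mem_filter.1 hy
  refine ⟨y, hyS, hyx, fun a ha => ha.key_lt.not_ge (hmin a ?_)⟩
  exact mem_filter.2 ⟨ha.left_mem, ha.time_eq.trans hyx⟩

lemma card_filter_isLeftNeighbour_add_card_le {X S : Finset Pt} (hXS : X ⊆ S)
    (ht : Set.InjOn Prod.snd (X : Set Pt)) :
    (S.filter fun b => ∃ a, IsLeftNeighbour S a b).card + X.card ≤ S.card := by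
  have hrows : X.image Prod.snd ⊆ (S.filter fun b => ¬ ∃ a, IsLeftNeighbour S a b).image Prod.snd :=
    image_subset_iff.2 fun x hx => by
      obtain ⟨y, hy, hyx, hyl⟩ := exists_mem_row_forall_not_isLeftNeighbour (hXS hx)
      exact mem_image.2 ⟨y, mem_filter.2 ⟨hy, not_exists.2 hyl⟩, hyx⟩
  have hX : X.card ≤ (S.filter fun b => ¬ ∃ a, IsLeftNeighbour S a b).card := by
    rw [← card_image_of_injOn ht]
    exact (card_le_card hrows).trans card_image_le
  rw [← card_filter_add_card_filter_not (s := S) fun b => ∃ a, IsLeftNeighbour S a b]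
  exact Nat.add_le_add_left hX _

/-! ### Independent rectangles -/

/-- `R` spans a rectangle with no point of `X` in its interior; `R.1 ∈ X` is the corner with the
smaller key and the larger time, `R.2 ∈ X` the opposite one. -/
structure IsEmptyRect (X : Finset Pt) (R : Pt × Pt) : Prop where
  fst_mem : R.1 ∈ X
  snd_mem : R.2 ∈ X
  key_lt : R.1.1 < R.2.1
  time_lt : R.2.2 < R.1.2
  good : IsGoodPair X R

/-- The rectangles `Q` and `R`, oriented as in `IsEmptyRect`, overlap properly, with `Q` shifted
towards smaller keys and smaller times. -/
def CornerOverlap (Q R : Pt × Pt) : Prop :=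
  Q.1.1 < R.1.1 ∧ R.1.1 < Q.2.1 ∧ Q.2.1 < R.2.1 ∧ Q.2.2 < R.2.2 ∧ R.2.2 < Q.1.2 ∧ Q.1.2 < R.1.2

/-- The closed time intervals of two rectangles, oriented as in `IsEmptyRect`, intersect. -/
def TimesMeet (Q R : Pt × Pt) : Prop :=
  Q.2.2 ≤ R.1.2 ∧ R.2.2 ≤ Q.1.2

/-- The part of the rectangle `Q` in the time interval of `R` runs through `R` from its top side to
its bottom side, where times grow downwards. -/
structure Traverses (Q R : Pt × Pt) : Prop where
  left_le : R.1.1 ≤ Q.1.1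
  right_le : Q.2.1 ≤ R.2.1
  bottom_le : R.1.2 ≤ Q.1.2
  top_le : Q.2.2 ≤ R.2.2

/-- An independent family of empty rectangles, all of the orientation of `IsEmptyRect`. -/
structure IsIndep (X : Finset Pt) (I : Finset (Pt × Pt)) : Prop where
  isEmptyRect : ∀ R ∈ I, IsEmptyRect X R
  not_cornerOverlap : ∀ Q ∈ I, ∀ R ∈ I, ¬ CornerOverlap Q R

/-- The right ends of the pairs of row neighbours of `S` that lie in the rectangle `R`. -/
noncomputable def neighboursIn (S : Finset Pt) (R : Pt × Pt) : Finset Pt :=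
  S.filter fun b => ∃ a, IsLeftNeighbour S a b ∧
    R.1.1 ≤ a.1 ∧ b.1 ≤ R.2.1 ∧ R.2.2 ≤ b.2 ∧ b.2 ≤ R.1.2

section Independent

variable {X S : Finset Pt} {I : Finset (Pt × Pt)} {P Q R : Pt × Pt}

lemma IsEmptyRect.cornerOverlap (ht : Set.InjOn Prod.snd (X : Set Pt)) (hQ : IsEmptyRect X Q)
    (hR : IsEmptyRect X R) (hQR : TimesMeet Q R) (hl : Q.1.1 < R.1.1) (hm : R.1.1 < Q.2.1)
    (hr : Q.2.1 < R.2.1) : CornerOverlap Q R := by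
  have := hQ.time_lt
  obtain ⟨hQR₁, hQR₂⟩ := hQR
  have hbottom : Q.1.2 < R.1.2 := by
    have hne₁ : R.1.2 ≠ Q.1.2 := fun h => hl.ne' (congrArg Prod.fst (ht hR.fst_mem hQ.fst_mem h))
    have hne₂ : R.1.2 ≠ Q.2.2 := fun h => hm.ne (congrArg Prod.fst (ht hR.fst_mem hQ.snd_mem h))
    have hgood := hQ.good R.1 hR.fst_mem
    unfold inOpenRect at hgood
    omega
  have htop : Q.2.2 < R.2.2 := by
    have hne : Q.2.2 ≠ R.2.2 := fun h => hr.ne (congrArg Prod.fst (ht hQ.snd_mem hR.snd_mem h))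
    have hgood := hR.good Q.2 hQ.snd_mem
    unfold inOpenRect at hgood
    omega
  have hmid : R.2.2 ≠ Q.1.2 := fun h =>
    (hl.trans hR.key_lt).ne' (congrArg Prod.fst (ht hR.snd_mem hQ.fst_mem h))
  exact ⟨hl, hm, hr, htop, hQR₂.lt_of_ne hmid, hbottom⟩

lemma IsEmptyRect.traverses (hk : Set.InjOn Prod.fst (X : Set Pt))
    (ht : Set.InjOn Prod.snd (X : Set Pt)) (hQ : IsEmptyRect X Q) (hR : IsEmptyRect X R)
    (hQR : TimesMeet Q R) (hl : R.1.1 ≤ Q.1.1) (hr : Q.2.1 ≤ R.2.1) : Traverses Q R := by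
  have := hQ.key_lt
  obtain ⟨hQR₁, hQR₂⟩ := hQR
  refine ⟨hl, hr, ?_, ?_⟩
  · by_contra! hlt
    have hne₁ : R.1.1 ≠ Q.1.1 := fun h =>
      hlt.ne' (congrArg Prod.snd (hk hR.fst_mem hQ.fst_mem h))
    have hne₂ : R.2.2 ≠ Q.1.2 := fun h => by
      have := congrArg Prod.fst (ht hR.snd_mem hQ.fst_mem h)
      omega
    have hgood := hR.good Q.1 hQ.fst_mem
    unfold inOpenRect at hgood
    omega
  · by_contra! hlt
    have hne₁ : R.2.1 ≠ Q.2.1 := fun h => hlt.ne (congrArg Prod.snd (hk hR.snd_mem hQ.snd_mem h))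
    have hne₂ : R.1.2 ≠ Q.2.2 := fun h => by
      have := congrArg Prod.fst (ht hR.fst_mem hQ.snd_mem h)
      omega
    have hgood := hR.good Q.2 hQ.snd_mem
    unfold inOpenRect at hgood
    omega

lemma IsIndep.mono {J : Finset (Pt × Pt)} (hI : IsIndep X I) (h : J ⊆ I) : IsIndep X J :=
  ⟨fun R hR => hI.isEmptyRect R (h hR),
    fun Q hQ R hR => hI.not_cornerOverlap Q (h hQ) R (h hR)⟩

lemma IsIndep.traverses (hI : IsIndep X I) (hk : Set.InjOn Prod.fst (X : Set Pt))
    (ht : Set.InjOn Prod.snd (X : Set Pt)) (hQ : Q ∈ I) (hR : R ∈ I)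
    (hw : Q.2.1 - Q.1.1 ≤ R.2.1 - R.1.1) (hQR : TimesMeet Q R) (hl : Q.1.1 < R.2.1)
    (hr : R.1.1 < Q.2.1) : Traverses Q R := by
  have hQX := hI.isEmptyRect Q hQ
  have hRX := hI.isEmptyRect R hR
  refine hQX.traverses hk ht hRX hQR ?_ ?_ <;> by_contra! hlt
  · exact hI.not_cornerOverlap Q hQ R hR
      (hQX.cornerOverlap ht hRX hQR hlt hr (by omega))
  · exact hI.not_cornerOverlap R hR Q hQ
      (hRX.cornerOverlap ht hQX ⟨hQR.2, hQR.1⟩ (by omega) hl hlt)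

lemma IsIndep.fst_eq_of_traverses (hI : IsIndep X I) (hk : Set.InjOn Prod.fst (X : Set Pt))
    (ht : Set.InjOn Prod.snd (X : Set Pt)) (hP : P ∈ I) (hQ : Q ∈ I) (hPR : Traverses P R)
    (hP₁ : P.1 = R.1) (hQR : Traverses Q R) (hR : R.2.2 ≤ R.1.2) (hl : Q.1.1 ≤ P.2.1)
    (hr : P.2.1 < Q.2.1) : Q.1 = R.1 := by
  have hPX := hI.isEmptyRect P hP
  have hQX := hI.isEmptyRect Q hQ
  have hmeet : TimesMeet P Q :=
    ⟨hPR.top_le.trans (hR.trans hQR.bottom_le), hQR.top_le.trans (hR.trans hPR.bottom_le)⟩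
  have hne : Q.1.1 ≠ P.2.1 := fun h => by
    have hlt := hPX.time_lt
    rw [← hk hQX.fst_mem hPX.snd_mem h, hP₁] at hlt
    exact hQR.bottom_le.not_gt hlt
  by_contra hQR₁
  have hlt : P.1.1 < Q.1.1 :=
    ((congrArg Prod.fst hP₁).trans_le hQR.left_le).lt_of_ne fun h =>
      hQR₁ ((hk hQX.fst_mem hPX.fst_mem h.symm).trans hP₁)
  exact hI.not_cornerOverlap P hP Q hQ
    (hPX.cornerOverlap ht hQX hmeet hlt (hl.lt_of_ne hne) hr)

lemma IsIndep.exists_line_of_widest (hI : IsIndep X I) (hk : Set.InjOn Prod.fst (X : Set Pt))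
    (ht : Set.InjOn Prod.snd (X : Set Pt)) (hR : R ∈ I)
    (hw : ∀ Q ∈ I, Q.2.1 - Q.1.1 ≤ R.2.1 - R.1.1) :
    ∃ c, R.1.1 ≤ c ∧ c < R.2.1 ∧
      ∀ Q ∈ I, Q ≠ R → TimesMeet Q R → Q.1.1 ≤ c → Q.2.1 ≤ c := by
  have hRX := hI.isEmptyRect R hR
  -- `c` is the right end of the widest other rectangle sharing the corner `R.1`, if there is any.
  rcases (I.filter fun Q => Q ≠ R ∧ Q.1 = R.1).eq_empty_or_nonempty with hempty | hne
  · refine ⟨R.1.1, le_rfl, hRX.key_lt, fun Q hQ hQR hmeet hl => ?_⟩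
    by_contra! hr
    have hle := (hI.traverses hk ht hQ hR (hw Q hQ) hmeet (hl.trans_lt hRX.key_lt) hr).left_le
    have hQ₁ := hk (hI.isEmptyRect Q hQ).fst_mem hRX.fst_mem (le_antisymm hl hle)
    exact notMem_empty Q (hempty ▸ mem_filter.2 ⟨hQ, hQR, hQ₁⟩)
  · obtain ⟨P, hP, hmax⟩ := exists_max_image _ (fun Q : Pt × Pt => Q.2.1) hne
    simp only [mem_filter, and_imp] at hP hmax
    obtain ⟨hP, hPR, hP₁⟩ := hP
    have hPX := hI.isEmptyRect P hP
    have hRP : R.1.1 < P.2.1 := hP₁ ▸ hPX.key_lt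
    have hPt := hI.traverses hk ht hP hR (hw P hP)
      ⟨hP₁ ▸ hPX.time_lt.le, hP₁ ▸ hRX.time_lt.le⟩ (hP₁ ▸ hRX.key_lt) hRP
    have hP₂ : P.2.1 ≠ R.2.1 := fun h => hPR (Prod.ext hP₁ (hk hPX.snd_mem hRX.snd_mem h))
    refine ⟨P.2.1, hRP.le, hPt.right_le.lt_of_ne hP₂, fun Q hQ hQR hmeet hl => ?_⟩
    by_contra! hr
    have hQt := hI.traverses hk ht hQ hR (hw Q hQ) hmeet
      (hl.trans_lt (hPt.right_le.lt_of_ne hP₂)) (hRP.trans hr)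
    exact hr.not_ge (hmax Q hQ hQR
      (hI.fst_eq_of_traverses hk ht hP hQ hPt hP₁ hQt hRX.time_lt.le hl hr))

lemma IsIndep.card_le_card_biUnion_neighboursIn (hI : IsIndep X I)
    (hk : Set.InjOn Prod.fst (X : Set Pt)) (ht : Set.InjOn Prod.snd (X : Set Pt)) (hXS : X ⊆ S)
    (hS : ArbSat S) : I.card ≤ (I.biUnion (neighboursIn S)).card := by
  induction I using Finset.induction_on_max_value (fun Q : Pt × Pt => Q.2.1 - Q.1.1) with
  | empty => simp
  | insert R J hRJ hmax ih =>
    have hR := mem_insert_self R J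
    have hRX := hI.isEmptyRect R hR
    obtain ⟨c, hlc, hcr, hc⟩ := hI.exists_line_of_widest hk ht hR (by simpa using hmax)
    obtain ⟨a, b, hab, hRa, hac, hcb, hbR, htop, hbottom⟩ := hS.exists_isLeftNeighbour
      (hXS hRX.fst_mem) (hXS hRX.snd_mem) hRX.time_lt.le hlc hcr
    have hbR : b ∈ neighboursIn S R :=
      mem_filter.2 ⟨hab.right_mem, a, hab, hRa, hbR, htop, hbottom⟩
    have hbJ : b ∉ J.biUnion (neighboursIn S) := by
      intro hb
      obtain ⟨Q, hQ, hbQ⟩ := mem_biUnion.1 hb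
      obtain ⟨-, a', hab', hQa, hbQ, hQtop, hQbottom⟩ := mem_filter.1 hbQ
      obtain rfl := hab'.unique hab
      have hQc := hc Q (mem_insert_of_mem hQ) (ne_of_mem_of_not_mem hQ hRJ)
        ⟨hQtop.trans hbottom, htop.trans hQbottom⟩ (hQa.trans hac)
      exact hcb.not_ge (hbQ.trans hQc)
    calc (insert R J).card = J.card + 1 := card_insert_of_notMem hRJ
      _ ≤ (J.biUnion (neighboursIn S)).card + 1 := by grw [ih (hI.mono (subset_insert R J))]
      _ = (insert b (J.biUnion (neighboursIn S))).card := (card_insert_of_notMem hbJ).symm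
      _ ≤ ((insert R J).biUnion (neighboursIn S)).card := card_le_card <| by
        rw [biUnion_insert]
        exact insert_subset (mem_union_left _ hbR) subset_union_right

theorem IsIndep.card_add_card_le (hI : IsIndep X I) (hk : Set.InjOn Prod.fst (X : Set Pt))
    (ht : Set.InjOn Prod.snd (X : Set Pt)) (hXS : X ⊆ S) (hS : ArbSat S) :
    I.card + X.card ≤ S.card := by
  have hsub : I.biUnion (neighboursIn S) ⊆ S.filter fun b => ∃ a, IsLeftNeighbour S a b :=
    biUnion_subset.2 fun R _ => monotone_filter_right S fun _ _ ⟨a, hab, _⟩ => ⟨a, hab⟩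
  calc I.card + X.card ≤ (S.filter fun b => ∃ a, IsLeftNeighbour S a b).card + X.card := by
        grw [hI.card_le_card_biUnion_neighboursIn hk ht hXS hS, hsub]
    _ ≤ S.card := card_filter_isLeftNeighbour_add_card_le hXS ht

end Independent

/-! ### Greedy runs and their good zag pairs -/

/-- The rectangle with corners `p` and `q` contains no point of `W` of time less than that of `p`,
except possibly `q`: this is GREEDY's test for touching the key of `q` when it processes `p`. -/
def Sees (W : Finset Pt) (p q : Pt) : Prop :=
  ∀ r ∈ W, r.2 < p.2 → inRect p q r → r = q

/-- The recursion satisfied by the set `W = X ∪ G` of all input points and points added by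
GREEDY. -/
def IsGreedyRun (X W : Finset Pt) : Prop :=
  ∀ w, w ∈ W ↔ w ∈ X ∨
    ∃ x ∈ X, x.2 = w.2 ∧ w.1 ≠ x.1 ∧ ∃ s < w.2, (w.1, s) ∈ W ∧ Sees W x (w.1, s)

/-- `r` is touched while processing `R.1`, which sees the point with the key of `r` and the time of
the input point `R.2`. This describes `R = CP(r)` without reference to GREEDY. -/
structure Realizes (X W : Finset Pt) (r : Pt) (R : Pt × Pt) : Prop where
  fst_mem : R.1 ∈ X
  snd_mem : R.2 ∈ X
  time_eq : R.1.2 = r.2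
  time_lt : R.2.2 < r.2
  mem : (r.1, R.2.2) ∈ W
  sees : Sees W R.1 (r.1, R.2.2)

/-- `r` realizes the good pair `R`, which is a zag (in `MFC`) with `key(R.1) < key(r)`. -/
structure IsGoodRightZag (X W : Finset Pt) (r : Pt) (R : Pt × Pt) : Prop
    extends Realizes X W r R where
  lt_key : R.1.1 < r.1
  key_le : r.1 ≤ R.2.1
  good : IsGoodPair X R

section GreedyRun

variable {X W : Finset Pt} {r s : Pt} {Q R : Pt × Pt}

lemma IsGreedyRun.subset (hW : IsGreedyRun X W) : X ⊆ W :=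
  fun x hx => (hW x).2 (.inl hx)

lemma IsGreedyRun.exists_time_eq (hW : IsGreedyRun X W) {w : Pt} (hw : w ∈ W) :
    ∃ x ∈ X, x.2 = w.2 := by
  rcases (hW w).1 hw with hwX | ⟨x, hx, hxw, -⟩
  exacts [⟨w, hwX, rfl⟩, ⟨x, hx, hxw⟩]

lemma IsGreedyRun.mem_of_sees (hW : IsGreedyRun X W) {x : Pt} (hx : x ∈ X) {k t : ℤ}
    (hkt : (k, t) ∈ W) (htx : t < x.2) (hkx : k ≠ x.1) (hs : Sees W x (k, t)) : (k, x.2) ∈ W :=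
  (hW _).2 (.inr ⟨x, hx, rfl, hkx, t, htx, hkt, hs⟩)

lemma IsGoodRightZag.isEmptyRect (h : IsGoodRightZag X W r R) : IsEmptyRect X R :=
  ⟨h.fst_mem, h.snd_mem, h.lt_key.trans_le h.key_le, h.time_lt.trans_eq h.time_eq.symm, h.good⟩

lemma IsGoodRightZag.unique (hr : IsGoodRightZag X W r R) (hs : IsGoodRightZag X W s R) :
    r = s := by
  have key_le {r s : Pt} (hr : IsGoodRightZag X W r R) (hs : IsGoodRightZag X W s R) :
      s.1 ≤ r.1 := by
    by_contra! hlt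
    have hlk := hr.lt_key
    have htl := hs.isEmptyRect.time_lt
    have heq : (r.1, R.2.2) = (s.1, R.2.2) :=
      hs.sees _ hr.mem htl (by simp only [inRect]; omega)
    exact hlt.ne (Prod.ext_iff.1 heq).1
  exact Prod.ext (le_antisymm (key_le hs hr) (key_le hr hs)) (hr.time_eq.symm.trans hs.time_eq)

lemma IsGoodRightZag.notMem (hW : IsGreedyRun X W) (hR : IsGoodRightZag X W r R) {w : Pt}
    (hl : r.1 < w.1) (hr : w.1 < R.2.1) (htop : R.2.2 < w.2) (hbottom : w.2 < R.1.2) :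
    w ∉ W := by
  intro hw
  -- The earliest such point `v` was added because some `x` saw a point above the box. Their
  -- rectangle contains `R.2` if `x` is to the right of the box and `(r.1, R.2.2)` otherwise.
  let B := W.filter fun w => r.1 < w.1 ∧ w.1 < R.2.1 ∧ R.2.2 < w.2 ∧ w.2 < R.1.2
  obtain ⟨v, hv, hmin⟩ := B.exists_min_image Prod.snd ⟨w, mem_filter.2 ⟨hw, hl, hr, htop, hbottom⟩⟩
  simp only [B, mem_filter, and_imp] at hv hmin
  obtain ⟨hvW, hvl, hvr, hvtop, hvbottom⟩ := hv
  have hlk := hR.lt_key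
  rcases (hW v).1 hvW with hvX | ⟨x, hx, hxv, -, s, hsv, hsW, hsees⟩
  · exact hR.good v hvX (by unfold inOpenRect; omega)
  have hs : s ≤ R.2.2 := by
    by_contra! hlt
    exact hsv.not_ge (hmin (v.1, s) hsW hvl hvr hlt (hsv.trans hvbottom))
  rcases le_or_gt R.2.1 x.1 with hRx | hxR
  · have heq := hsees R.2 (hW.subset hR.snd_mem) (by omega) (by simp only [inRect]; omega)
    exact hvr.ne' (Prod.ext_iff.1 heq).1
  · have hxl : x.1 ≤ R.1.1 := by
      have hgood := hR.good x hx
      unfold inOpenRect at hgood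
      omega
    have heq := hsees (r.1, R.2.2) hR.mem (by simp only; omega) (by simp only [inRect]; omega)
    exact hvl.ne (Prod.ext_iff.1 heq).1

/-- If the rectangles overlapped, `Q.1` would see the point `(s.1, R.2.2)` and so touch the key of
`s` before `R.1` is processed. -/
lemma IsGoodRightZag.not_cornerOverlap (hW : IsGreedyRun X W) (hQ : IsGoodRightZag X W r Q)
    (hR : IsGoodRightZag X W s R) : ¬ CornerOverlap Q R := by
  rintro ⟨hl, hm, -, htop, hmid, hbottom⟩
  have hQr := hQ.lt_key
  have hRs := hR.lt_key
  have hsees : Sees W Q.1 (s.1, R.2.2) := by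
    intro w hw hwt hrect
    simp only [inRect] at hrect
    rcases le_or_gt w.1 r.1 with hwr | hrw
    · have heq := hQ.sees w hw hwt (by simp only [inRect]; omega)
      have hwQ : w.2 = Q.2.2 := (Prod.ext_iff.1 heq).2
      omega
    rcases lt_or_ge w.1 R.1.1 with hwR | hRw
    · exact absurd hw (hQ.notMem hW hrw (by omega) (by omega) hwt)
    · exact hR.sees w hw (by omega) (by simp only [inRect]; omega)
  have htouch : (s.1, Q.1.2) ∈ W := hW.mem_of_sees hQ.fst_mem hR.mem hmid (by omega) hsees
  have heq := hR.sees _ htouch hbottom (by simp only [inRect]; omega)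
  exact hmid.ne' (Prod.ext_iff.1 heq).2

theorem card_add_card_le_of_isGoodRightZag {S A : Finset Pt} (hW : IsGreedyRun X W)
    (hk : Set.InjOn Prod.fst (X : Set Pt)) (ht : Set.InjOn Prod.snd (X : Set Pt)) (hXS : X ⊆ S)
    (hS : ArbSat S) (hA : ∀ r ∈ A, ∃ R, IsGoodRightZag X W r R) : A.card + X.card ≤ S.card := by
  choose! φ hφ using hA
  have hinj : Set.InjOn φ A := fun r hr s hs h => (hφ r hr).unique (h ▸ hφ s hs)
  have hindep : IsIndep X (A.image φ) := by
    constructor <;> simp only [forall_mem_image]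
    · exact fun r hr => (hφ r hr).isEmptyRect
    · exact fun r hr s hs => (hφ r hr).not_cornerOverlap hW (hφ s hs)
  rw [← card_image_of_injOn hinj]
  exact hindep.card_add_card_le hk ht hXS hS

end GreedyRun

/-! ### Reflection of the key axis -/

/-- The reflection of the key axis, which exchanges the two orientations of zag pairs. -/
def mirror : Pt ≃ Pt := (Equiv.neg ℤ).prodCongr (Equiv.refl ℤ)

section Mirror

variable {X W S : Finset Pt} {p q r : Pt} {R : Pt × Pt}

lemma mirror_fst : (mirror p).1 = -p.1 := rfl

lemma mirror_snd : (mirror p).2 = p.2 := rfl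

lemma mirror_mem_map_mirror : mirror p ∈ S.map mirror.toEmbedding ↔ p ∈ S :=
  mem_map' mirror.toEmbedding

lemma neg_mk_mem_map_mirror {k t : ℤ} : (-k, t) ∈ S.map mirror.toEmbedding ↔ (k, t) ∈ S :=
  mirror_mem_map_mirror (p := (k, t))

lemma inRect_mirror : inRect (mirror p) (mirror q) (mirror r) ↔ inRect p q r := by
  simp only [inRect, mirror_fst, mirror_snd]
  omega

lemma inOpenRect_mirror : inOpenRect (mirror p) (mirror q) (mirror r) ↔ inOpenRect p q r := by
  simp only [inOpenRect, mirror_fst, mirror_snd]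
  omega

lemma injOn_fst_map_mirror (hk : Set.InjOn Prod.fst (X : Set Pt)) :
    Set.InjOn Prod.fst (X.map mirror.toEmbedding : Set Pt) := by
  rw [coe_map]
  rintro _ ⟨p, hp, rfl⟩ _ ⟨q, hq, rfl⟩ h
  exact congrArg mirror (hk hp hq (neg_injective h))

lemma injOn_snd_map_mirror (ht : Set.InjOn Prod.snd (X : Set Pt)) :
    Set.InjOn Prod.snd (X.map mirror.toEmbedding : Set Pt) := by
  rw [coe_map]
  rintro _ ⟨p, hp, rfl⟩ _ ⟨q, hq, rfl⟩ h
  exact congrArg mirror (ht hp hq h)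

lemma ArbSat.map_mirror (hS : ArbSat S) : ArbSat (S.map mirror.toEmbedding) := by
  simp only [ArbSat, forall_mem_map, Equiv.coe_toEmbedding]
  intro p hp q hq
  refine (hS p hp q hq).imp (congrArg Neg.neg) (Or.imp_right ?_)
  rintro ⟨r, hr, hrp, hrq, hrect⟩
  exact ⟨mirror r, mirror_mem_map_mirror.2 hr, mirror.injective.ne hrp, mirror.injective.ne hrq,
    inRect_mirror.2 hrect⟩

lemma sees_map_mirror :
    Sees (W.map mirror.toEmbedding) (mirror p) (mirror q) ↔ Sees W p q := by
  simp only [Sees, forall_mem_map, Equiv.coe_toEmbedding, mirror_snd, inRect_mirror,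
    EmbeddingLike.apply_eq_iff_eq]

lemma isGoodPair_map_mirror :
    IsGoodPair (X.map mirror.toEmbedding) (mirror R.1, mirror R.2) ↔ IsGoodPair X R := by
  simp only [IsGoodPair, forall_mem_map, Equiv.coe_toEmbedding, inOpenRect_mirror]

lemma IsGreedyRun.map_mirror (hW : IsGreedyRun X W) :
    IsGreedyRun (X.map mirror.toEmbedding) (W.map mirror.toEmbedding) := by
  have hsees (x w : Pt) (t : ℤ) :
      Sees (W.map mirror.toEmbedding) (mirror x) (-w.1, t) ↔ Sees W x (w.1, t) :=
    sees_map_mirror (q := (w.1, t))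
  refine mirror.surjective.forall.2 fun w => ?_
  rw [mirror_mem_map_mirror, mirror_mem_map_mirror, hW w]
  refine or_congr_right (Iff.trans ?_ mirror.surjective.exists.symm)
  simp only [mirror_mem_map_mirror, neg_mk_mem_map_mirror, mirror_fst, mirror_snd, ne_eq, neg_inj,
    hsees]

lemma Realizes.map_mirror (h : Realizes X W r R) :
    Realizes (X.map mirror.toEmbedding) (W.map mirror.toEmbedding) (mirror r)
      (mirror R.1, mirror R.2) where
  fst_mem := mirror_mem_map_mirror.2 h.fst_mem
  snd_mem := mirror_mem_map_mirror.2 h.snd_mem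
  time_eq := h.time_eq
  time_lt := h.time_lt
  mem := neg_mk_mem_map_mirror.2 h.mem
  sees := sees_map_mirror.2 h.sees

end Mirror

/-! ### The execution of GREEDY -/

section Execution

variable {X G : Finset Pt} {n : ℕ} {w : Pt}

lemma mem_greedyStep_s3 {t : ℤ} :
    w ∈ greedyStep X G t ↔ w.2 = t ∧
      ∃ x ∈ X, x.2 = t ∧ w.1 ≠ x.1 ∧ ∃ s < t, (w.1, s) ∈ X ∪ G ∧ Sees (X ∪ G) x (w.1, s) := by
  simp only [greedyStep, mem_biUnion, mem_image, mem_filter, Sees]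
  constructor
  · rintro ⟨x, ⟨hx, rfl⟩, q, ⟨⟨hq, hqx⟩, hne, hsees⟩, rfl⟩
    exact ⟨rfl, x, hx, rfl, hne, q.2, hqx, hq, fun r hr hrx => hsees r ⟨hr, hrx⟩⟩
  · rintro ⟨rfl, x, hx, hxw, hne, s, hs, hsW, hsees⟩
    exact ⟨x, ⟨hx, hxw⟩, (w.1, s), ⟨⟨hsW, hs⟩, hne, fun r hr => hsees r hr.1 (hxw ▸ hr.2)⟩, rfl⟩

lemma greedyStep_congr {G' : Finset Pt} {t : ℤ} (h : ∀ w : Pt, w.2 < t → (w ∈ G ↔ w ∈ G')) :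
    greedyStep X G t = greedyStep X G' t := by
  have hfilter : (X ∪ G).filter (fun s => s.2 < t) = (X ∪ G').filter fun s => s.2 < t := by
    ext w
    simp +contextual only [mem_filter, mem_union, and_congr_left_iff, h, implies_true]
  unfold greedyStep
  rw [hfilter]

lemma mem_greedyUpTo_s3 :
    w ∈ greedyUpTo X n ↔ 1 ≤ w.2 ∧ w.2 ≤ n ∧ w ∈ greedyStep X (greedyUpTo X n) w.2 := by
  induction n generalizing w with
  | zero => simp only [greedyUpTo, notMem_empty, false_iff]; omega
  | succ n ih =>
    have hstep (hw : w.2 ≤ n + 1) :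
        greedyStep X (greedyUpTo X (n + 1)) w.2 = greedyStep X (greedyUpTo X n) w.2 :=
      greedyStep_congr fun v hv => by
        have : v ∉ greedyStep X (greedyUpTo X n) (n + 1) := fun hvn => by
          have := (mem_greedyStep_s3.1 hvn).1
          omega
        simp [greedyUpTo, this]
    have hlast : w ∈ greedyStep X (greedyUpTo X n) (n + 1) ↔
        w.2 = n + 1 ∧ w ∈ greedyStep X (greedyUpTo X n) w.2 :=
      ⟨fun h => have hw := (mem_greedyStep_s3.1 h).1; ⟨hw, hw.symm ▸ h⟩, fun h => h.1 ▸ h.2⟩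
    rw [greedyUpTo, mem_union, ih, hlast, ← greedyUpTo]
    push_cast
    constructor
    · rintro (⟨h₁, hn, hw⟩ | ⟨hn, hw⟩)
      · exact ⟨h₁, by omega, hstep (by omega) ▸ hw⟩
      · exact ⟨by omega, hn.le, hstep hn.le ▸ hw⟩
    · rintro ⟨h₁, hn, hw⟩
      rw [hstep hn] at hw
      rcases hn.eq_or_lt with hn | hn
      · exact .inr ⟨hn, hw⟩
      · exact .inl ⟨h₁, by omega, hw⟩

lemma isGreedyRun_greedyG (hn : ∀ x ∈ X, 1 ≤ x.2 ∧ x.2 ≤ n) :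
    IsGreedyRun X (X ∪ greedyG n X) := by
  intro w
  rw [mem_union, greedyG, mem_greedyUpTo_s3, mem_greedyStep_s3]
  exact or_congr_right ⟨fun h => h.2.2.2, fun ⟨x, hx, hxw, h⟩ =>
    ⟨hxw ▸ (hn x hx).1, hxw ▸ (hn x hx).2, rfl, x, hx, hxw, h⟩⟩

lemma OP_eq (ht : Set.InjOn Prod.snd (X : Set Pt)) {x : Pt} (hx : x ∈ X) (hxw : x.2 = w.2) :
    OP X w = x := by
  have hfilter : X.filter (fun p => p.2 = w.2) = {x} := by
    ext y
    simp only [mem_filter, mem_singleton]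
    exact ⟨fun ⟨hy, hyw⟩ => ht hy hx (hyw.trans hxw.symm), by rintro rfl; exact ⟨hx, hxw⟩⟩
  rw [OP, hfilter, toList_singleton, List.headI]

lemma firstAbove_eq {S : Finset Pt} {p : Pt} {s : ℤ} (hs : (p.1, s) ∈ S) (hsp : s < p.2)
    (hmax : ∀ q ∈ S, q.1 = p.1 → q.2 < p.2 → q.2 ≤ s) : firstAbove S p = (p.1, s) := by
  have : ((S.filter fun q => q.1 = p.1 ∧ q.2 < p.2).image Prod.snd).max = (s : WithBot ℤ) := by
    apply le_antisymm
    · simp only [Finset.max_le_iff, forall_mem_image, mem_filter, WithBot.coe_le_coe, and_imp]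
      exact fun q hq hqp hlt => hmax q hq hqp hlt
    · exact le_max (mem_image.2 ⟨(p.1, s), mem_filter.2 ⟨hs, rfl, hsp⟩, rfl⟩)
  rw [firstAbove, this, WithBot.unbotD_coe]

lemma IsGreedyRun.realizes_CP (hW : IsGreedyRun X (X ∪ G))
    (ht : Set.InjOn Prod.snd (X : Set Pt)) {r : Pt} (hr : r ∈ X ∪ G)
    (hne : (CP X G r).1.1 ≠ r.1) : Realizes X (X ∪ G) r (CP X G r) := by
  rcases (hW r).1 hr with hrX | ⟨x, hx, hxr, -, s, hsr, hsW, hsees⟩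
  · exact absurd (congrArg Prod.fst (OP_eq ht hrX rfl)) hne
  have hfirst : firstAbove (X ∪ G) r = (r.1, s) := by
    refine firstAbove_eq hsW hsr fun q hq hqr hlt => ?_
    by_contra! hsq
    have heq := hsees q hq (hxr ▸ hlt) (by simp only [inRect]; omega)
    exact hsq.ne' (Prod.ext_iff.1 heq).2
  obtain ⟨y, hy, rfl⟩ := hW.exists_time_eq hsW
  have hCP : CP X G r = (x, y) := by
    rw [CP, hfirst, OP_eq ht hx hxr, OP_eq (w := (r.1, y.2)) ht hy rfl]
  rw [hCP]
  exact ⟨hx, hy, hxr, hsr, hsW, hsees⟩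

end Execution

section LowerBound

variable {X G S : Finset Pt}

lemma IsGreedyRun.card_rightZag_add_card_le (hW : IsGreedyRun X (X ∪ G))
    (hk : Set.InjOn Prod.fst (X : Set Pt)) (ht : Set.InjOn Prod.snd (X : Set Pt)) (hXS : X ⊆ S)
    (hS : ArbSat S) :
    (G.filter fun r => (inMFC X G r ∧ IsGoodPair X (CP X G r)) ∧ (CP X G r).1.1 < r.1).card +
      X.card ≤ S.card := by
  refine card_add_card_le_of_isGoodRightZag hW hk ht hXS hS fun r hr => ⟨CP X G r, ?_⟩
  obtain ⟨hrG, ⟨hzag, hgood⟩, hlt⟩ := mem_filter.1 hr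
  unfold inMFC at hzag
  exact ⟨hW.realizes_CP ht (mem_union_right X hrG) hlt.ne, hlt, by omega, hgood⟩

lemma IsGreedyRun.card_leftZag_add_card_le (hW : IsGreedyRun X (X ∪ G))
    (hk : Set.InjOn Prod.fst (X : Set Pt)) (ht : Set.InjOn Prod.snd (X : Set Pt)) (hXS : X ⊆ S)
    (hS : ArbSat S) :
    (G.filter fun r => (inMFC X G r ∧ IsGoodPair X (CP X G r)) ∧ ¬ (CP X G r).1.1 < r.1).card +
      X.card ≤ S.card := by
  rw [← card_map mirror.toEmbedding, ← card_map (s := X) mirror.toEmbedding,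
    ← card_map (s := S) mirror.toEmbedding]
  refine card_add_card_le_of_isGoodRightZag hW.map_mirror (injOn_fst_map_mirror hk)
    (injOn_snd_map_mirror ht) (map_subset_map.2 hXS) hS.map_mirror
    (forall_mem_map.2 fun r hr => ⟨(mirror (CP X G r).1, mirror (CP X G r).2), ?_⟩)
  obtain ⟨hrG, ⟨hzag, hgood⟩, hnlt⟩ := mem_filter.1 hr
  unfold inMFC at hzag
  have hlt : r.1 < (CP X G r).1.1 := by omega
  have hle : (CP X G r).2.1 ≤ r.1 := by omega
  exact ⟨(hW.realizes_CP ht (mem_union_right X hrG) hlt.ne').map_mirror, neg_lt_neg hlt,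
    neg_le_neg hle, isGoodPair_map_mirror.2 hgood⟩

theorem good_pairs_lower_bound_general {n : ℕ} (hk : Set.InjOn Prod.fst (X : Set Pt))
    (ht : Set.InjOn Prod.snd (X : Set Pt)) (hn : ∀ x ∈ X, 1 ≤ x.2 ∧ x.2 ≤ n) (hXS : X ⊆ S)
    (hS : ArbSat S) :
    ((greedyG n X).filter (fun r => inMFC X (greedyG n X) r ∧
        IsGoodPair X (CP X (greedyG n X) r))).card + 2 * X.card ≤ 2 * S.card := by
  have hW := isGreedyRun_greedyG hn
  have hright := hW.card_rightZag_add_card_le hk ht hXS hS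
  have hleft := hW.card_leftZag_add_card_le hk ht hXS hS
  rw [← filter_filter] at hright hleft
  rw [← card_filter_add_card_filter_not fun r => (CP X (greedyG n X) r).1.1 < r.1]
  omega

end LowerBound

section Permutation

variable {n : ℕ} {X : Finset Pt}

lemma IsPermPointSet.injOn_fst (hX : IsPermPointSet n X) : Set.InjOn Prod.fst (X : Set Pt) := by
  obtain ⟨σ, rfl⟩ := hX
  simp [Set.InjOn, Fin.val_inj]

lemma IsPermPointSet.injOn_snd (hX : IsPermPointSet n X) : Set.InjOn Prod.snd (X : Set Pt) := by
  obtain ⟨σ, rfl⟩ := hX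
  simp [Set.InjOn, Fin.val_inj]

lemma IsPermPointSet.time_bounds (hX : IsPermPointSet n X) : ∀ x ∈ X, 1 ≤ x.2 ∧ x.2 ≤ n := by
  obtain ⟨σ, rfl⟩ := hX
  refine forall_mem_image.2 fun t _ => ?_
  simp only
  omega

end Permutation

/-- Let `X` be a permutation point set and `OPT(X)` a point set of minimum
cardinality such that `X ∪ OPT(X)` is arborally satisfied. Then
`2 · |X ∪ OPT(X)| ≥ |GR| + 2 · |X|`, where `GR` is the set of points of `G` whose pair is a
good pair. -/
theorem good_pairs_lower_bound (n : ℕ) (X : Finset Pt) (hX : IsPermPointSet n X)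
    (Y : Finset Pt) (hsat : ArbSat (X ∪ Y))
    (hmin : ∀ Z : Finset Pt, ArbSat (X ∪ Z) → Y.card ≤ Z.card) :
    ((greedyG n X).filter (fun r => inMFC X (greedyG n X) r ∧
        IsGoodPair X (CP X (greedyG n X) r))).card + 2 * X.card ≤ 2 * (X ∪ Y).card :=
  good_pairs_lower_bound_general hX.injOn_fst hX.injOn_snd hX.time_bounds subset_union_left hsat
end

section
/- Let S be a finite arborally satisfied planar point set and let p, q ∈ S with time(q) < time(p) and key(p) < key(q). Then there exists a point r ∈ S \ {p, q} lying in the closed axis-parallel rectangle with corners p and q such that either r is above p (key(r) = key(p) and time(r) < time(p)) or time(r) = time(p) and key(p) < key(r). -/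
open Finset

attribute [local instance] Classical.propDecidable

/-! Order the points of `S \ {p}` in the rectangle spanned by `p` and `q` by inclusion of the
rectangles they span with `p`, and let `m` be a minimal one. If `m` shared no coordinate with `p`,
the point of `S` in the rectangle of `p` and `m` given by arboral satisfaction would be smaller. -/

/-- Arboral satisfaction for point sets in a product of two lattices. The closed axis-parallel
rectangle with opposite corners `p` and `q` is encoded as the order interval `Set.uIcc p q`. -/
def IsArborallySatisfied {α β : Type*} [Lattice α] [Lattice β] (S : Set (α × β)) : Prop :=
  ∀ p ∈ S, ∀ q ∈ S, p.1 ≠ q.1 → p.2 ≠ q.2 → ∃ r ∈ S, r ≠ p ∧ r ≠ q ∧ r ∈ Set.uIcc p q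

theorem exists_mem_forall_mem_uIcc_imp_eq {α : Type*} [DistribLattice α] {T : Set α}
    (hfin : T.Finite) (hne : T.Nonempty) (p : α) :
    ∃ m ∈ T, ∀ r ∈ T, r ∈ Set.uIcc p m → r = m := by
  obtain ⟨m, hmT, hmin⟩ := hfin.exists_minimalFor (Set.uIcc p) T hne
  refine ⟨m, hmT, fun r hrT hr => ?_⟩
  have hm : m ∈ Set.uIcc p r := hmin hrT (Set.uIcc_subset_uIcc_left hr) Set.right_mem_uIcc
  exact Set.eq_of_mem_uIcc_of_mem_uIcc' hr hm

theorem exists_point_above_or_right_general {α β : Type*} [DistribLattice α] [DistribLattice β]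
    {S : Set (α × β)} (hS : IsArborallySatisfied S) {p q : α × β}
    (hfin : (S ∩ Set.uIcc p q).Finite) (hp : p ∈ S) (hq : q ∈ S)
    (hkey : p.1 ≠ q.1) (htime : p.2 ≠ q.2) :
    ∃ r ∈ S, r ≠ p ∧ r ≠ q ∧ r ∈ Set.uIcc p q ∧ (r.1 = p.1 ∨ r.2 = p.2) := by
  let T : Set (α × β) := {r ∈ S ∩ Set.uIcc p q | r ≠ p}
  have hqT : q ∈ T := ⟨⟨hq, Set.right_mem_uIcc⟩, fun h => hkey (h ▸ rfl)⟩
  have hTfin : T.Finite := hfin.subset (Set.sep_subset _ _)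
  obtain ⟨m, ⟨⟨hm, hmq⟩, hmp⟩, hclosest⟩ := exists_mem_forall_mem_uIcc_imp_eq hTfin ⟨q, hqT⟩ p
  have hside : m.1 = p.1 ∨ m.2 = p.2 := by
    by_contra! hoff
    obtain ⟨r, hr, hrp, hrm, hrect⟩ := hS p hp m hm hoff.1.symm hoff.2.symm
    have hrq : r ∈ Set.uIcc p q := Set.uIcc_subset_uIcc_left hmq hrect
    exact hrm (hclosest r ⟨⟨hr, hrq⟩, hrp⟩ hrect)
  have hm_ne_q : m ≠ q := by
    rintro rfl
    exact hside.elim hkey.symm htime.symm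
  exact ⟨m, hm, hmp, hm_ne_q, hmq, hside⟩

theorem mem_uIcc_iff_inRect {p q r : Pt} : r ∈ Set.uIcc p q ↔ inRect p q r := by
  simp only [Set.uIcc, Set.mem_Icc, Prod.le_def, inRect, Prod.fst_inf, Prod.snd_inf, Prod.fst_sup,
    Prod.snd_sup]
  tauto

theorem isArborallySatisfied_coe {S : Finset Pt} :
    IsArborallySatisfied (S : Set Pt) ↔ ArbSat S := by
  simp only [IsArborallySatisfied, ArbSat, mem_uIcc_iff_inRect, Finset.mem_coe, ne_eq,
    or_iff_not_imp_left]

/-- In a finite arborally satisfied set `S`, for `p, q ∈ S` with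
`time(q) < time(p)` and `key(p) < key(q)`, there is a point `r ∈ S \ {p, q}` in the closed
rectangle spanned by `p` and `q` that is above `p` or on the horizontal line of `p`, to the
right of `p`. -/
theorem exists_point_above_or_right (S : Finset Pt) (hS : ArbSat S)
    (p q : Pt) (hp : p ∈ S) (hq : q ∈ S) (ht : q.2 < p.2) (hk : p.1 < q.1) :
    ∃ r ∈ S, r ≠ p ∧ r ≠ q ∧ inRect p q r ∧
      ((r.1 = p.1 ∧ r.2 < p.2) ∨ (r.2 = p.2 ∧ p.1 < r.1)) := by
  obtain ⟨r, hr, hrp, hrq, hrect, hside⟩ := exists_point_above_or_right_general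
    (isArborallySatisfied_coe.2 hS) (S.finite_toSet.inter_of_left _) hp hq hk.ne ht.ne'
  exact ⟨r, hr, hrp, hrq, mem_uIcc_iff_inRect.1 hrect, by grind [mem_uIcc_iff_inRect, inRect]⟩
end
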